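/- The image of the Capelli Berezinian under the Harish-Chandra homomorphism is χ_{m|n}(C_{m|n}(−T)) = (T+ℓ_1−m)⋯(T+ℓ_m−m)·(T−ℓ_{1̄}−m)^{−1}⋯(T−ℓ_{n̄}−m)^{−1}. -/

import Mathlib

set_option maxHeartbeats 1000000
set_option synthInstance.maxHeartbeats 400000

noncomputable section
open scoped TensorProduct

/-- The index set `I = {1,…,m,1̄,…,n̄}` of `gl(m|n)`; `Sum.inl` are the even
(unbarred) indices, `Sum.inr` the odd (barred) ones.  The index set
`Î = {0} ∪ I` of `gl(m+1|n)` is realized as `Ind (m+1) n`, with `0 = Sum.inl 0`. -/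
abbrev Ind (m n : ℕ) := Fin m ⊕ Fin n

/-- Parity of an index, as `0` or `1`. -/
def pI {m n : ℕ} : Ind m n → ℕ := Sum.elim (fun _ => 0) (fun _ => 1)

/-- The total order `1 < ⋯ < m < 1̄ < ⋯ < n̄` on `I` (and, with `m+1` in place of `m`,
the order `0 < 1 < ⋯ < m < 1̄ < ⋯ < n̄` on `Î`). -/
def iltI {m n : ℕ} : Ind m n → Ind m n → Prop
  | Sum.inl a, Sum.inl b => a < b
  | Sum.inl _, Sum.inr _ => True
  | Sum.inr _, Sum.inl _ => False
  | Sum.inr a, Sum.inr b => a < b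

/-- The distinguished index `0` of `Î`. -/
def z0 {m n : ℕ} : Ind (m+1) n := Sum.inl 0

/-- The inclusion `I ↪ Î`. -/
def emb {m n : ℕ} : Ind m n → Ind (m+1) n := Sum.map Fin.succ id

lemma emb_injective {m n : ℕ} : Function.Injective (emb (m := m) (n := n)) := by
  intro a b h
  cases a <;> cases b <;> simp [emb, Fin.succ_inj] at h <;> simp [h]

lemma emb_ne_z0 {m n : ℕ} (a : Ind m n) : emb a ≠ z0 := by
  cases a <;> simp [emb, z0, Fin.succ_ne_zero]

/-- Builds a linear map out of a space with basis `α` from a function on basis vectors. -/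
def mkOp {α M : Type} [AddCommGroup M] [Module ℂ M] (g : α → M) : (α →₀ ℂ) →ₗ[ℂ] M :=
  Finsupp.lsum ℂ fun x => LinearMap.toSpanSingleton ℂ M (g x)

/-- Number of odd variables occurring before position `i`. -/
def cntB {n : ℕ} (b : Fin n → Bool) (i : Fin n) : ℕ :=
  (Finset.univ.filter fun j => j < i ∧ b j = true).card

/-- Number of odd variables occurring. -/
def cntA {n : ℕ} (b : Fin n → Bool) : ℕ := (Finset.univ.filter fun j => b j = true).card


/-- The defining (super-)commutation relations of `gl`:
`e_ij e_kl − (−1)^{(|i|+|j|)(|k|+|l|)} e_kl e_ij = δ_jk e_il − (−1)^{(|i|+|j|)(|k|+|l|)} δ_li e_kj`. -/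
inductive glRel (ι : Type) (p : ι → ℕ) [DecidableEq ι] :
    FreeAlgebra ℂ (ι × ι) → FreeAlgebra ℂ (ι × ι) → Prop
  | basic (i j k l : ι) : glRel ι p
      (FreeAlgebra.ι ℂ (i, j) * FreeAlgebra.ι ℂ (k, l)
        - ((-1 : ℂ) ^ ((p i + p j) * (p k + p l))) •
            (FreeAlgebra.ι ℂ (k, l) * FreeAlgebra.ι ℂ (i, j)))
      ((if j = k then FreeAlgebra.ι ℂ (i, l) else 0)
        - ((-1 : ℂ) ^ ((p i + p j) * (p k + p l))) •
            (if l = i then FreeAlgebra.ι ℂ (k, j) else 0))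

/-- The universal enveloping superalgebra of the general linear Lie superalgebra with
index set `ι` and parity `p`, presented by generators `e_ij` and the super-commutator
relations. -/
abbrev UEA (ι : Type) (p : ι → ℕ) [DecidableEq ι] : Type := RingQuot (glRel ι p)

/-- The generator `e_ij` of `UEA ι p`. -/
def gen {ι : Type} (p : ι → ℕ) [DecidableEq ι] (i j : ι) : UEA ι p :=
  RingQuot.mkAlgHom ℂ (glRel ι p) (FreeAlgebra.ι ℂ (i, j))

/-- Monomials of the `D'(m|n)`-module `F_a`: such a monomial
`t_0^{a−k_1−⋯−k_{n̄}} t_1^{k_1}⋯t_m^{k_m} t_{1̄}^{k_{1̄}}⋯t_{n̄}^{k_{n̄}}` is determined by the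
exponents `(k_1,…,k_m,k_{1̄},…,k_{n̄})`. -/
abbrev FaMon (m n : ℕ) := (Fin m → ℕ) × (Fin n → Bool)

/-- The module `F_a`, as the vector space with basis its monomials. -/
abbrev FaSp (m n : ℕ) : Type := FaMon m n →₀ ℂ

/-- A basis monomial of `F_a`. -/
def amono {m n : ℕ} (x : FaMon m n) : FaSp m n := Finsupp.single x 1

/-- The parity of a monomial of `F_a`. -/
def parM {m n : ℕ} (x : FaMon m n) : ℕ := cntA x.2

/-- The monomial `t_0^a` of `F_a`. -/
def hwMon (m n : ℕ) : FaMon m n := (fun _ => 0, fun _ => false)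

/-- Multiplication by `t_i/t_0` on `F_a`, even `i`. -/
def aDivE {m n : ℕ} (i : Fin m) : Module.End ℂ (FaSp m n) :=
  mkOp fun x => amono (Function.update x.1 i (x.1 i + 1), x.2)

/-- Multiplication by `t_ī/t_0` on `F_a`, odd `ī`. -/
def aDivO {m n : ℕ} (i : Fin n) : Module.End ℂ (FaSp m n) :=
  mkOp fun x => if x.2 i then 0 else
    ((-1 : ℂ) ^ (cntB x.2 i)) • amono (x.1, Function.update x.2 i true)

/-- The operator `t_0∂_0` on `F_a` (the exponent of `t_0` is `a` minus the total degree of the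
other variables). -/
def aPar0 {m n : ℕ} (a : ℂ) : Module.End ℂ (FaSp m n) :=
  mkOp fun x => (a - (∑ i, (x.1 i : ℂ)) - (cntA x.2 : ℂ)) • amono x

/-- The operator `t_0∂_i` on `F_a`, even `i`. -/
def aParE {m n : ℕ} (i : Fin m) : Module.End ℂ (FaSp m n) :=
  mkOp fun x => (x.1 i : ℂ) • amono (Function.update x.1 i (x.1 i - 1), x.2)

/-- The operator `t_0∂_ī` on `F_a`, odd `ī`. -/
def aParO {m n : ℕ} (i : Fin n) : Module.End ℂ (FaSp m n) :=
  mkOp fun x => if x.2 i then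
    ((-1 : ℂ) ^ (cntB x.2 i)) • amono (x.1, Function.update x.2 i false) else 0

/-- `t_i/t_0` on `F_a` for `i ∈ I`. -/
def aDiv {m n : ℕ} : Ind m n → Module.End ℂ (FaSp m n) := Sum.elim aDivE aDivO

/-- `t_0∂_i` on `F_a` for `i ∈ Î`. -/
def aParB {m n : ℕ} (a : ℂ) : Ind (m+1) n → Module.End ℂ (FaSp m n) :=
  Sum.elim (Fin.cases (aPar0 a) aParE) aParO

/-- `t_i/t_0` on `F_a` for `i ∈ Î`. -/
def aDivB {m n : ℕ} : Ind (m+1) n → Module.End ℂ (FaSp m n) :=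
  Sum.elim (Fin.cases 1 aDivE) aDivO

/-- The operator `t_i∂_j` on `F_a`, `i, j ∈ Î`. -/
def aTD {m n : ℕ} (a : ℂ) (i j : Ind (m+1) n) : Module.End ℂ (FaSp m n) :=
  aDivB i * aParB a j

/-- The simple highest weight module `L(λ)` over `U(gl(m|n))`: a simple module with a
(nonzero) highest weight vector of weight `λ`. -/
structure SimpleHW (m n : ℕ) (lam : Ind m n → ℂ) where
  L : Type
  [acg : AddCommGroup L]
  [mod : Module ℂ L]
  ρ : UEA (Ind m n) pI →ₐ[ℂ] Module.End ℂ L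
  v : L
  v_ne : v ≠ 0
  hw : ∀ i j : Ind m n, iltI i j → ρ (gen pI i j) v = 0
  hwt : ∀ i : Ind m n, ρ (gen pI i i) v = lam i • v
  simple : ∀ N : Submodule ℂ L, (∀ u x, x ∈ N → ρ u x ∈ N) → N = ⊥ ∨ N = ⊤

attribute [instance] SimpleHW.acg SimpleHW.mod

/-- The Verma module `M(λ)` over `U(gl(m|n))`: a module generated by a highest weight vector
of weight `λ` which is universal among such. -/
structure VermaM (m n : ℕ) (lam : Ind m n → ℂ) where
  L : Type
  [acg : AddCommGroup L]
  [mod : Module ℂ L]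
  ρ : UEA (Ind m n) pI →ₐ[ℂ] Module.End ℂ L
  v : L
  v_ne : v ≠ 0
  hw : ∀ i j : Ind m n, iltI i j → ρ (gen pI i j) v = 0
  hwt : ∀ i : Ind m n, ρ (gen pI i i) v = lam i • v
  gens : ∀ N : Submodule ℂ L, (∀ u x, x ∈ N → ρ u x ∈ N) → v ∈ N → N = ⊤
  univ : ∀ (W : Type) [AddCommGroup W] [Module ℂ W]
      (ρW : UEA (Ind m n) pI →ₐ[ℂ] Module.End ℂ W) (w : W),
      (∀ i j : Ind m n, iltI i j → ρW (gen pI i j) w = 0) →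
      (∀ i : Ind m n, ρW (gen pI i i) w = lam i • w) →
      ∃ g : L →ₗ[ℂ] W, g v = w ∧ ∀ u x, g (ρ u x) = ρW u (g x)

attribute [instance] VermaM.acg VermaM.mod

/-- The predicate expressing that `Θ` is the representation of `U(gl(m+1|n))` on
`F_a ⊗ L` obtained via `φ_R` from a representation `ρ` of `U(gl(m|n))` on `L`, where the
central element `R` acts by the scalar `r`; the formulas for the action of the generators on
pure tensors (with the appropriate Koszul signs) are written out explicitly. -/
def IsTensorRep {m n : ℕ} (a r : ℂ) {L : Type} [AddCommGroup L] [Module ℂ L]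
    (ρ : UEA (Ind m n) pI →ₐ[ℂ] Module.End ℂ L)
    (Θ : UEA (Ind (m+1) n) pI →ₐ[ℂ] Module.End ℂ (FaSp m n ⊗[ℂ] L)) : Prop :=
  (∀ (c d : Ind m n) (x : FaMon m n) (v : L),
    Θ (gen pI (emb c) (emb d)) (amono x ⊗ₜ[ℂ] v) =
      (aTD a (emb c) (emb d)) (amono x) ⊗ₜ[ℂ] v
      + ((-1 : ℂ) ^ ((pI c + pI d) * parM x)) • (amono x ⊗ₜ[ℂ] (ρ (gen pI c d) v))
      + (if c = d then (((-1 : ℂ) ^ (pI c * pI d)) * r) • (amono x ⊗ₜ[ℂ] v) else 0)) ∧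
  (∀ (c : Ind m n) (x : FaMon m n) (v : L),
    Θ (gen pI (emb c) z0) (amono x ⊗ₜ[ℂ] v) =
      (aTD a (emb c) z0) (amono x) ⊗ₜ[ℂ] v
      - ∑ j : Ind m n, (((-1 : ℂ) ^ (pI c * pI j)) * ((-1 : ℂ) ^ ((pI c + pI j) * parM x))) •
          ((aDiv j (amono x)) ⊗ₜ[ℂ] (ρ (gen pI c j) v))) ∧
  (∀ (d : Ind m n) (x : FaMon m n) (v : L),
    Θ (gen pI z0 (emb d)) (amono x ⊗ₜ[ℂ] v) = (aTD a z0 (emb d)) (amono x) ⊗ₜ[ℂ] v) ∧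
  (∀ (x : FaMon m n) (v : L),
    Θ (gen pI z0 z0) (amono x ⊗ₜ[ℂ] v) =
      (aTD a z0 z0) (amono x) ⊗ₜ[ℂ] v + r • (amono x ⊗ₜ[ℂ] v))

/-- The shifted weight `λ̃ = (a+r, λ_1+r, …, λ_m+r, λ_{1̄}−r, …, λ_{n̄}−r)`. -/
def lamTilde {m n : ℕ} (a r : ℂ) (lam : Ind m n → ℂ) : Ind (m+1) n → ℂ :=
  Sum.elim (Fin.cases (a + r) fun k => lam (Sum.inl k) + r) fun k => lam (Sum.inr k) - r

/-- The Weyl vector `ρ_{m|n} = (m, m−1, …, 1, −1, −2, …, −n)`. -/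
def rhoS {m n : ℕ} : Ind m n → ℂ := Sum.elim (fun k => (m : ℂ) - k) fun k => -(k : ℂ) - 1

/-- Antidominance of a weight of `gl(m|n)`:
`⟨λ+ρ, α^∨⟩ ∉ ℤ_{>0}` for all positive even roots `α`. -/
def Antidom {m n : ℕ} (lam : Ind m n → ℂ) : Prop :=
  (∀ i j : Fin m, i < j → ¬∃ N : ℕ,
    (lam (Sum.inl i) + rhoS (m:=m) (n:=n) (Sum.inl i)) - (lam (Sum.inl j) + rhoS (m:=m) (n:=n) (Sum.inl j)) = (N : ℂ) + 1) ∧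
  (∀ i j : Fin n, i < j → ¬∃ N : ℕ,
    (lam (Sum.inr i) + rhoS (m:=m) (n:=n) (Sum.inr i)) - (lam (Sum.inr j) + rhoS (m:=m) (n:=n) (Sum.inr j)) = (N : ℂ) + 1)

/-- Typicality of a weight of `gl(m|n)`:
`(λ+ρ, α) ≠ 0` for all positive odd isotropic roots `α = δ_i − ε_j`. -/
def Typical {m n : ℕ} (lam : Ind m n → ℂ) : Prop :=
  ∀ (i : Fin m) (j : Fin n),
    (lam (Sum.inl i) + rhoS (m:=m) (n:=n) (Sum.inl i)) + (lam (Sum.inr j) + rhoS (m:=m) (n:=n) (Sum.inr j)) ≠ 0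

/-- The algebra of Laurent-type series in `T` with coefficients in `A`: Hahn series over `ℤ`,
where the exponent `k` records the power `T^{-k}` (so that supports of honest Laurent series
in `T^{-1}`, with finitely many positive powers of `T`, are well-ordered). -/
abbrev TSer (A : Type) [Ring A] := HahnSeries ℤ A

/-- The variable `T`. -/
def Tv {A : Type} [Ring A] : TSer A := HahnSeries.single (-1 : ℤ) (1 : A)

/-- The matrix `𝔈 = ((−1)^{|i|} e_{ij})_{i,j∈I}` with entries in `A`, as a matrix of constant
series. -/
def scrE (m n : ℕ) {A : Type} [Ring A] [Algebra ℂ A] (e : Ind m n → Ind m n → A) :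
    Matrix (Ind m n) (Ind m n) (TSer A) :=
  fun i j => HahnSeries.C (((-1 : ℂ) ^ (pI i)) • e i j)

/-- The Capelli Berezinian
`C_{m|n}(v) = Det[(𝔈−v−i+1)_{ij}]_{i,j≤m} ⬝ Det[((𝔈−v−m+i)^{−1})^{st}_{ij}]_{m<i,j≤m+n}`
of the matrix `E`, evaluated at the series `v`.  Here `Det` denotes the column determinant
`Σ_σ sgn(σ) X_{σ(1),1}⋯X_{σ(N),N}`, matrix inverses are taken in the matrix ring over the
Laurent series algebra (via `Ring.inverse`), and the supertransposition signs
`(−1)^{|i|(|j|+1)}` are equal to `1` on the odd-odd block. -/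
def capelli {m n : ℕ} {A : Type} [Ring A] [Algebra ℂ A]
    (E : Matrix (Ind m n) (Ind m n) (TSer A)) (v : TSer A) : TSer A :=
  (∑ σ : Equiv.Perm (Fin m), ((Equiv.Perm.sign σ : ℤˣ) : ℤ) •
      (List.ofFn fun t : Fin m =>
        E (Sum.inl (σ t)) (Sum.inl t)
          - (if σ t = t then v + (((t : ℕ) : ℂ) • 1) else 0)).prod)
  * (∑ τ : Equiv.Perm (Fin n), ((Equiv.Perm.sign τ : ℤˣ) : ℤ) •
      (List.ofFn fun t : Fin n =>
        (Ring.inverse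
          (E - (v + ((((m : ℂ) - ((t : ℕ) : ℂ)) - 1) • 1)) •
            (1 : Matrix (Ind m n) (Ind m n) (TSer A))))
          (Sum.inr t) (Sum.inr (τ t))).prod)

/-!
Let `E = ((-1)^|i| e_ij)`. Gauss elimination turns the two determinants of the Capelli Berezinian
at `-T` into one ordered product over the indices `a`: the factor at `a` is the last diagonal
entry of the inverse of `T + c_a + E'`, where `E'` is the leading principal submatrix of `E`
ending at `a` and `c_a` is a constant, and this entry is inverted if `a` is even. The elimination
is possible since the entries of `T + E` and of its inverse satisfy the exchange relations of
Manin matrices.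

For the product, both assertions are local. To see that it is central, it suffices to consider
generators attached to two adjacent indices; all factors but two commute with these, and the two
remaining ones are dealt with by the supercommutation relations of `gl` with a resolvent. On a
highest weight vector `E'` is triangular, so each factor acts by a scalar read off the diagonal.
Comparing this with the action of `χ` on the Verma modules of all highest weights gives the
identity. Verma modules are nonzero since every weight is the highest weight of some
representation: let `e_ij = ∑ k, x_ik ∂_jk` act on a Fock space where the exponents of the
variables `x_ii` are shifted by arbitrary complex numbers, and take the vacuum vector.
-/

open Matrix
open scoped Ring

section SuperMatrices

variable {ι R : Type*} [Fintype ι] [DecidableEq ι] [Ring R] {p : ι → ℕ}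

/-- The matrix of left multiplication by an element `x` of parity `d`, with the Koszul sign
`(-1)^(d * p k)` for moving `x` past an index `k`. -/
def superScalar (p : ι → ℕ) (d : ℕ) (x : R) : Matrix ι ι R :=
  diagonal fun k => (-1 : ℤˣ) ^ (d * p k) • x

/-- The matrix `Y` transforms under the supercommutator with the entries of `E` like the matrix
`E = ((-1)^|i| e_ij)` of generators of `gl`. In this form the condition says that `Y` commutes with
some other matrices, hence it passes to inverses; `superCovariant_iff` spells out the entries. -/
def SuperCovariant (p : ι → ℕ) (E Y : Matrix ι ι R) : Prop :=
  ∀ i j, Commute (superScalar p (p i + p j) (E i j) - (-1 : ℤˣ) ^ (p i * p j) • single j i 1) Y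

/-- The entries of `E = ((-1)^|i| e_ij)` satisfy the defining relations of `gl`. -/
def IsSuperGL (p : ι → ℕ) (E : Matrix ι ι R) : Prop :=
  SuperCovariant p E E

theorem superScalar_mul_apply (d : ℕ) (x : R) (Y : Matrix ι ι R) (k l : ι) :
    (superScalar p d x * Y) k l = (-1 : ℤˣ) ^ (d * p k) • (x * Y k l) := by
  rw [superScalar, diagonal_mul, smul_mul_assoc]

theorem mul_superScalar_apply (d : ℕ) (x : R) (Y : Matrix ι ι R) (k l : ι) :
    (Y * superScalar p d x) k l = (-1 : ℤˣ) ^ (d * p l) • (Y k l * x) := by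
  rw [superScalar, mul_diagonal, mul_smul_comm]

theorem commute_superScalar_iff {d : ℕ} {x : R} {Y : Matrix ι ι R} :
    Commute (superScalar p d x) Y ↔
      ∀ k l, x * Y k l = (-1 : ℤˣ) ^ (d * (p k + p l)) • (Y k l * x) := by
  refine Matrix.ext_iff.symm.trans (forall₂_congr fun k l => ?_)
  rw [superScalar_mul_apply, mul_superScalar_apply, smul_eq_iff_eq_inv_smul, smul_smul, mul_add,
    pow_add, Int.units_inv_eq_self]

theorem single_one_mul_apply (a b k l : ι) (Y : Matrix ι ι R) :
    (single a b 1 * Y : Matrix ι ι R) k l = if a = k then Y b l else 0 := by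
  rcases eq_or_ne a k with rfl | h
  · rw [single_mul_apply_same, one_mul, if_pos rfl]
  · rw [single_mul_apply_of_ne _ _ _ _ _ h.symm, if_neg h]

theorem mul_single_one_apply (a b k l : ι) (Y : Matrix ι ι R) :
    (Y * single a b 1 : Matrix ι ι R) k l = if b = l then Y k a else 0 := by
  rcases eq_or_ne b l with rfl | h
  · rw [mul_single_apply_same, mul_one, if_pos rfl]
  · rw [mul_single_apply_of_ne _ _ _ _ _ h.symm, if_neg h]

theorem mul_single_one_mul_apply (a b k l : ι) (Y Z : Matrix ι ι R) :
    (Y * single a b 1 * Z : Matrix ι ι R) k l = Y k a * Z b l := by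
  simp only [mul_apply (M := Y * _), mul_single_one_apply, ite_mul, zero_mul,
    Finset.sum_ite_eq, Finset.mem_univ, if_true]

theorem superCovariant_iff {E Y : Matrix ι ι R} :
    SuperCovariant p E Y ↔ ∀ i j k l,
      E i j * Y k l - (-1 : ℤˣ) ^ ((p i + p j) * (p k + p l)) • (Y k l * E i j) =
        (-1 : ℤˣ) ^ (p i * p j + p i * p k + p j * p k) •
          ((if j = k then Y i l else 0) - (if i = l then Y k j else 0)) := by
  refine forall₂_congr fun i j => Matrix.ext_iff.symm.trans (forall₂_congr fun k l => ?_)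
  rw [sub_mul, mul_sub, Matrix.sub_apply, Matrix.sub_apply, superScalar_mul_apply,
    mul_superScalar_apply, smul_mul_assoc, mul_smul_comm, Matrix.smul_apply, Matrix.smul_apply,
    single_one_mul_apply, mul_single_one_apply, sub_eq_sub_iff_sub_eq_sub, ← smul_sub,
    ← (MulAction.injective ((-1 : ℤˣ) ^ ((p i + p j) * p k))).eq_iff, smul_sub, smul_smul,
    smul_smul, smul_smul, Int.units_mul_self, one_smul, ← pow_add, ← pow_add, ← mul_add,
    add_comm _ (p i * p j), add_mul _ _ (p k), ← add_assoc]

theorem SuperCovariant.submatrix {κ : Type*} [Fintype κ] [DecidableEq κ] {E Y : Matrix ι ι R}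
    (h : SuperCovariant p E Y) {f : κ → ι} (hf : f.Injective) :
    SuperCovariant (p ∘ f) (E.submatrix f f) (Y.submatrix f f) :=
  superCovariant_iff.2 fun i j k l => by
    simpa only [hf.eq_iff, submatrix_apply, Function.comp_apply] using
      superCovariant_iff.1 h (f i) (f j) (f k) (f l)

theorem commute_ringInverse {M : Type*} [MonoidWithZero M] {a b : M} (h : Commute a b) :
    Commute a b⁻¹ʳ := by
  by_cases hb : IsUnit b
  · rw [Ring.inverse_of_isUnit hb]
    exact Commute.units_inv_right h
  · rw [Ring.inverse_non_unit b hb]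
    exact Commute.zero_right a

theorem commute_smul_one {u : R} (hu : ∀ x, Commute u x) (M : Matrix ι ι R) :
    Commute M (u • 1) := by
  ext k l
  rw [smul_one_eq_diagonal, mul_diagonal, diagonal_mul, (hu _).eq]

theorem commute_resolvent {u : R} (hu : ∀ x, Commute u x) {M E : Matrix ι ι R}
    (h : Commute M E) : Commute M (u • 1 + E)⁻¹ʳ :=
  commute_ringInverse ((commute_smul_one hu M).add_right h)

theorem IsSuperGL.superCovariant_resolvent {E : Matrix ι ι R} (hE : IsSuperGL p E) {u : R}
    (hu : ∀ x, Commute u x) : SuperCovariant p E (u • 1 + E)⁻¹ʳ := fun i j =>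
  commute_resolvent hu (hE i j)

theorem SuperCovariant.mul_superScalar_sub {E Y : Matrix ι ι R} (h : SuperCovariant p E Y)
    (k l : ι) :
    E * superScalar p (p k + p l) (Y k l) - superScalar p (p k + p l) (Y k l) * E =
      (-1 : ℤˣ) ^ (p k * p l) • (Y * single l k 1 - single l k 1 * Y) := by
  ext a b
  have hsign : (-1 : ℤˣ) ^ ((p k + p l) * p a) =
      (-1) ^ ((p k + p l) * p b) * (-1) ^ ((p a + p b) * (p k + p l)) := by
    rw [← pow_add]
    exact neg_one_pow_congr (by simp only [Nat.even_add, Nat.even_mul]; tauto)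
  rw [Matrix.sub_apply, superScalar_mul_apply, mul_superScalar_apply, Matrix.smul_apply,
    Matrix.sub_apply, single_one_mul_apply, mul_single_one_apply, hsign, mul_smul, ← smul_sub,
    superCovariant_iff.1 h, smul_smul, ← pow_add, smul_sub, smul_sub]
  have hl (h : a = l) : (-1 : ℤˣ) ^ ((p k + p l) * p b + (p a * p b + p a * p k + p b * p k)) =
      (-1) ^ (p k * p l) :=
    neg_one_pow_congr (by simp only [h, Nat.even_add, Nat.even_mul]; tauto)
  have hk (h : b = k) : (-1 : ℤˣ) ^ ((p k + p l) * p b + (p a * p b + p a * p k + p b * p k)) =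
      (-1) ^ (p k * p l) :=
    neg_one_pow_congr (by simp only [h, Nat.even_add, Nat.even_mul]; tauto)
  congr 1 <;> simp only [smul_ite, smul_zero, eq_comm (a := l), eq_comm (a := k)]
  · split_ifs with h
    · rw [hk h]
    · rfl
  · split_ifs with h
    · rw [hl h]
    · rfl

theorem mul_smul_of_central {κ μ ν : Type*} [Fintype μ] {u : R} (hu : ∀ x, Commute u x)
    (M : Matrix κ μ R) (N : Matrix μ ν R) : M * u • N = u • (M * N) := by
  ext i j
  simp only [mul_apply, Matrix.smul_apply, smul_eq_mul, Finset.mul_sum, (hu (M _ _)).left_comm]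

theorem resolvent_sub_resolvent {E : Matrix ι ι R} {u v : R} (hu : ∀ x, Commute u x)
    (hv : ∀ x, Commute v x) (hU : IsUnit (u • 1 + E)) (hV : IsUnit (v • 1 + E)) :
    (u • 1 + E)⁻¹ʳ - (v • 1 + E)⁻¹ʳ = (v - u) • ((u • 1 + E)⁻¹ʳ * (v • 1 + E)⁻¹ʳ) := by
  rw [← mul_smul_of_central fun x => (hv x).sub_left (hu x)]
  calc _ = (u • 1 + E)⁻¹ʳ * ((v • 1 + E) - (u • 1 + E)) * (v • 1 + E)⁻¹ʳ := by
        rw [mul_sub, sub_mul, Ring.mul_inverse_cancel_right _ _ hV, Ring.inverse_mul_cancel _ hU,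
          one_mul]
    _ = _ := by
        rw [add_sub_add_right_eq_sub, ← sub_smul, mul_assoc, smul_mul_assoc, one_mul]

theorem IsSuperGL.resolvent_rtt {E : Matrix ι ι R} (hE : IsSuperGL p E) {u v : R}
    (hu : ∀ x, Commute u x) (hv : ∀ x, Commute v x) (hU : IsUnit (u • 1 + E))
    (hV : IsUnit (v • 1 + E)) (k l a b : ι) :
    (v - u) * ((-1 : ℤˣ) ^ ((p k + p l) * p a) • ((u • 1 + E)⁻¹ʳ k l * (v • 1 + E)⁻¹ʳ a b) -
        (-1 : ℤˣ) ^ ((p k + p l) * p b) • ((v • 1 + E)⁻¹ʳ a b * (u • 1 + E)⁻¹ʳ k l)) =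
      (-1 : ℤˣ) ^ (p k * p l) • ((u • 1 + E)⁻¹ʳ a l * (v • 1 + E)⁻¹ʳ k b -
        (v • 1 + E)⁻¹ʳ a l * (u • 1 + E)⁻¹ʳ k b) := by
  have hYZ := resolvent_sub_resolvent hu hv hU hV
  have hZY := resolvent_sub_resolvent hv hu hV hU
  have hY := (hE.superCovariant_resolvent hu).mul_superScalar_sub k l
  set Y := (u • 1 + E)⁻¹ʳ
  set Z := (v • 1 + E)⁻¹ʳ
  set S := superScalar p (p k + p l) (Y k l)
  set s : Matrix ι ι R := single l k 1
  have hw (x : R) : Commute (v - u) x := (hv x).sub_left (hu x)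
  have hSZ : S * Z - Z * S = Z * (E * S - S * E) * Z :=
    calc S * Z - Z * S = Z * ((v • 1 + E) * S - S * (v • 1 + E)) * Z := by
          rw [mul_sub, sub_mul, Ring.inverse_mul_cancel_left _ _ hV, ← mul_assoc,
            Ring.mul_inverse_cancel_right _ _ hV]
      _ = Z * (E * S - S * E) * Z := by
          rw [add_mul, mul_add, (commute_smul_one hv S).eq, add_sub_add_left_eq_sub]
  have key : (v - u) • (S * Z - Z * S) = (-1 : ℤˣ) ^ (p k * p l) • (Y * s * Z - Z * s * Y) := by
    rw [hSZ, hY, mul_smul_comm, smul_mul_assoc, smul_comm]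
    congr 1
    calc (v - u) • (Z * (Y * s - s * Y) * Z)
        = (v - u) • (Z * Y) * s * Z - Z * s * (v - u) • (Y * Z) := by
          simp only [mul_sub, sub_mul, smul_sub, mul_smul_of_central hw, smul_mul_assoc, mul_assoc]
      _ = Y * s * Z - Z * s * Y := by
          rw [← hYZ, ← neg_sub u v, neg_smul, ← hZY]
          noncomm_ring
  simpa only [Matrix.smul_apply, Matrix.sub_apply, smul_eq_mul, superScalar_mul_apply,
    mul_superScalar_apply, mul_single_one_mul_apply, S, s] using congr_fun₂ key a b

end SuperMatrices

section Exchange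

variable {ι R : Type*} [Fintype ι] [DecidableEq ι] [Ring R] {p : ι → ℕ}

/-- The exchange relation of Manin matrices, for two successive columns: swapping the column labels
changes the sign of every `2 × 2` column minor built from `Y` and `Z`. A matrix `Y` with commuting
entries satisfies it with `Z = Y`. The first index is the label, the second one the position. -/
def IsManinPair {κ ν : Type*} (Y Z : Matrix κ ν R) : Prop :=
  ∀ k a l b, Y k l * Z a b - Y k b * Z a l = -(Y a l * Z k b - Y a b * Z k l)

theorem IsSuperGL.isManinPair_resolvent {E : Matrix ι ι R} (hE : IsSuperGL p E) {u : R}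
    (hu : ∀ x, Commute u x) (hU : IsUnit (u • 1 + E)) (hV : IsUnit ((u + 1) • 1 + E)) {κ : Type*}
    {f : κ → ι} (hf : ∀ k, Odd (p (f k))) :
    IsManinPair ((u • 1 + E)⁻¹ʳ.submatrix f f) (((u + 1) • 1 + E)⁻¹ʳ.submatrix f f) := by
  intro k a l b
  have rtt (l b : κ) := hE.resolvent_rtt hu (fun x => (hu x).add_left (Commute.one_left x)) hU hV
    (f k) (f l) (f a) (f b)
  simp only [add_sub_cancel_left, one_mul, ((hf _).add_odd (hf _)).mul_right _ |>.neg_one_pow,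
    ((hf _).mul (hf _)).neg_one_pow, one_smul, Units.neg_smul] at rtt
  simp only [submatrix_apply]
  have h₁ := rtt l b
  have h₂ := rtt b l
  grind

theorem IsSuperGL.smul_one_add {E : Matrix ι ι R} (hE : IsSuperGL p E) {u : R}
    (hu : ∀ x, Commute u x) : IsSuperGL p (u • 1 + E) := by
  intro i j
  have hc (y : R) : Commute (u * (1 : Matrix ι ι R) i j) y := by
    rw [one_apply]
    split_ifs
    · rw [mul_one]; exact hu y
    · rw [mul_zero]; exact Commute.zero_left y
  have h : superScalar p (p i + p j) ((u • 1 + E) i j) =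
      (u * (1 : Matrix ι ι R) i j) • 1 + superScalar p (p i + p j) (E i j) := by
    rcases eq_or_ne i j with rfl | hij
    · simp only [superScalar, Matrix.add_apply, Matrix.smul_apply, smul_eq_mul,
        (Even.add_self (p i)).mul_right _ |>.neg_one_pow, one_smul, smul_one_eq_diagonal (_ * _),
        diagonal_add]
    · simp only [superScalar, Matrix.add_apply, Matrix.smul_apply, one_apply_ne hij, mul_zero,
        smul_zero, zero_add, zero_smul]
  rw [h, add_sub_assoc]
  exact (commute_smul_one hc _).symm.add_left
    ((commute_smul_one hu _).add_right (hE i j))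

theorem IsSuperGL.isManinPair_transpose {E : Matrix ι ι R} (hE : IsSuperGL p E) {u : R}
    (hu : ∀ x, Commute u x) {κ : Type*} {f : κ → ι} (hf : ∀ k, Even (p (f k)))
    (hi : f.Injective) :
    IsManinPair ((u • 1 + E).submatrix f f)ᵀ (((u - 1) • 1 + E).submatrix f f)ᵀ := by
  have h (k l i j : κ) := superCovariant_iff.1 (hE.smul_one_add hu) (f k) (f l) (f i) (f j)
  simp only [((hf _).add (hf _)).mul_right _ |>.neg_one_pow, one_smul,
    ((((hf _).mul_right (p _)).add ((hf _).mul_right (p _))).add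
      ((hf _).mul_right (p _))).neg_one_pow, hi.eq_iff] at h
  rw [sub_smul, one_smul, sub_add_eq_add_sub]
  generalize u • 1 + E = X at h ⊢
  intro k a l b
  have h₁ := h l k b a
  have h₂ := h l a b k
  have h₃ := h b a l k
  simp only [transpose_apply, submatrix_apply, Matrix.sub_apply, one_apply, hi.eq_iff, mul_sub,
    mul_ite, mul_one, mul_zero]
  clear h
  grind

theorem IsSuperGL.resolvent_exchange {E : Matrix ι ι R} (hE : IsSuperGL p E) {u v : R}
    (hu : ∀ x, Commute u x) (hv : ∀ x, Commute v x) (hU : IsUnit (u • 1 + E))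
    (hV : IsUnit (v • 1 + E)) {b : ι} (h : u - v = (-1) ^ p b) (a c : ι) :
    (v • 1 + E)⁻¹ʳ b b * (u • 1 + E)⁻¹ʳ a c - (u • 1 + E)⁻¹ʳ a c * (v • 1 + E)⁻¹ʳ b b =
      (v • 1 + E)⁻¹ʳ a b * (u • 1 + E)⁻¹ʳ b c - (u • 1 + E)⁻¹ʳ a b * (v • 1 + E)⁻¹ʳ b c := by
  have rtt := hE.resolvent_rtt hv hu hV hU b b a c
  have hb : Even (p b * p b) ↔ Even (p b) := by rw [Nat.even_mul, or_self]
  simp only [(Even.add_self (p b)).mul_right _ |>.neg_one_pow, one_smul, h,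
    neg_one_pow_congr hb] at rtt
  rcases Nat.even_or_odd (p b) with hp | hp
  · rwa [hp.neg_one_pow, hp.neg_one_pow, one_mul, one_smul] at rtt
  · rwa [hp.neg_one_pow, hp.neg_one_pow, neg_one_mul, Units.neg_smul, one_smul, neg_inj] at rtt

end Exchange

section SchurComplement

variable {R : Type*} [Ring R]

theorem isUnit_and_ringInverse_of_fromBlocks {κ ν : Type*} [Fintype κ] [DecidableEq κ] [Fintype ν]
    [DecidableEq ν] {A A' : Matrix κ κ R} {B B' : Matrix κ ν R} {C C' : Matrix ν κ R}
    {D D' : Matrix ν ν R} (h : fromBlocks A B C D * fromBlocks A' B' C' D' = 1)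
    (h' : fromBlocks A' B' C' D' * fromBlocks A B C D = 1) (hA : IsUnit A) :
    IsUnit D' ∧ A⁻¹ʳ = A' - B' * D'⁻¹ʳ * C' := by
  rw [fromBlocks_multiply, ← fromBlocks_one, fromBlocks_inj] at h h'
  obtain ⟨h₁₁, h₁₂, -, h₂₂⟩ := h
  obtain ⟨-, -, h'₂₁, h'₂₂⟩ := h'
  have hB : B' = -(A⁻¹ʳ * B * D') := by
    rw [← eq_neg_iff_add_eq_zero] at h₁₂
    rw [Matrix.mul_assoc, ← Matrix.mul_neg, ← h₁₂, ← Matrix.mul_assoc, Ring.inverse_mul_cancel _ hA,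
      Matrix.one_mul]
  have hC : C' * A = -(D' * C) := eq_neg_iff_add_eq_zero.2 h'₂₁
  have hC' : C' = -(D' * C * A⁻¹ʳ) := by
    rw [← Matrix.neg_mul, ← hC, Matrix.mul_assoc, Ring.mul_inverse_cancel _ hA, Matrix.mul_one]
  have hD : IsUnit D' := by
    refine ⟨⟨D', D - C * A⁻¹ʳ * B, ?_, ?_⟩, rfl⟩
    · rw [← h'₂₂, hC']
      simp only [Matrix.mul_sub, Matrix.neg_mul, Matrix.mul_assoc]
      abel
    · rw [← h₂₂, hB]
      simp only [Matrix.sub_mul, Matrix.mul_neg, Matrix.mul_assoc]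
      abel
  refine ⟨hD, ?_⟩
  calc A⁻¹ʳ = A⁻¹ʳ * (A * A' + B * C') := by rw [h₁₁, Matrix.mul_one]
    _ = A' + A⁻¹ʳ * B * (D' * D'⁻¹ʳ) * C' := by
      rw [Ring.mul_inverse_cancel _ hD, Matrix.mul_one, Matrix.mul_add, ← Matrix.mul_assoc,
        Ring.inverse_mul_cancel _ hA, Matrix.one_mul, Matrix.mul_assoc]
    _ = A' - B' * D'⁻¹ʳ * C' := by
      rw [hB, Matrix.neg_mul, Matrix.neg_mul, sub_neg_eq_add]
      simp only [Matrix.mul_assoc]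

theorem map_ringInverse_of_isUnit {M N F : Type*} [MonoidWithZero M] [MonoidWithZero N]
    [FunLike F M N] [MonoidHomClass F M N] (f : F) {x : M} (hx : IsUnit x) :
    f x⁻¹ʳ = (f x)⁻¹ʳ := by
  obtain ⟨u, rfl⟩ := hx
  rw [Ring.inverse_unit]
  exact (Ring.inverse_unit (Units.map (f : M →* N) u)).symm

theorem map_ringInverse {M N : Type*} [MonoidWithZero M] [MonoidWithZero N] (e : M ≃* N) (x : M) :
    e x⁻¹ʳ = (e x)⁻¹ʳ := by
  by_cases hx : IsUnit x
  · exact map_ringInverse_of_isUnit e hx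
  · rw [Ring.inverse_non_unit x hx, Ring.inverse_non_unit _ fun h => hx ((isUnit_map_iff e x).1 h),
      map_zero]

theorem isUnit_ringInverse_last_last {n : ℕ} {X : Matrix (Fin (n + 1)) (Fin (n + 1)) R}
    (hX : IsUnit X) (hX' : IsUnit (X.submatrix Fin.castSucc Fin.castSucc)) :
    IsUnit (X⁻¹ʳ (Fin.last n) (Fin.last n)) ∧ ∀ i j,
      (X.submatrix Fin.castSucc Fin.castSucc)⁻¹ʳ i j =
        X⁻¹ʳ i.castSucc j.castSucc - X⁻¹ʳ i.castSucc (Fin.last n) *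
          (X⁻¹ʳ (Fin.last n) (Fin.last n))⁻¹ʳ * X⁻¹ʳ (Fin.last n) j.castSucc := by
  let e : Fin n ⊕ Fin 1 ≃ Fin (n + 1) := finSumFinEquiv
  have h {M N : Matrix (Fin (n + 1)) (Fin (n + 1)) R} (hMN : M * N = 1) :
      M.submatrix e e * N.submatrix e e = 1 := by
    rw [submatrix_mul_equiv, hMN, submatrix_one_equiv]
  have h₁ := h (Ring.mul_inverse_cancel X hX)
  have h₂ := h (Ring.inverse_mul_cancel X hX)
  rw [← fromBlocks_toBlocks (X.submatrix e e), ← fromBlocks_toBlocks (X⁻¹ʳ.submatrix e e)] at h₁ h₂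
  obtain ⟨hD, hS⟩ := isUnit_and_ringInverse_of_fromBlocks h₁ h₂ hX'
  let entry : Matrix (Fin 1) (Fin 1) R ≃* R := (uniqueRingEquiv (m := Fin 1) (A := R)).toMulEquiv
  have hd : (X⁻¹ʳ.submatrix e e).toBlocks₂₂⁻¹ʳ 0 0 = (X⁻¹ʳ (Fin.last n) (Fin.last n))⁻¹ʳ :=
    map_ringInverse entry _
  refine ⟨(isUnit_map_iff entry _).2 hD, fun i j => ?_⟩
  have hij := congr_fun₂ hS i j
  rwa [Matrix.sub_apply, Matrix.mul_apply, Fin.sum_univ_one, Matrix.mul_apply, Fin.sum_univ_one,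
    hd] at hij

end SchurComplement

section RankTwo

theorem mul_quasidet_of_commutators {R : Type*} [Ring R] {s t : ℤˣ} {x a f g y d : R}
    (ha : x * a - a * x = -(t • f)) (hf : x * f - (s * t) • (f * x) = 0)
    (hg : x * g - (s * t) • (g * x) = s • (a - y)) (hy : x * y - y * x = s • f)
    (hdy : d * y = 1) (hyd : y * d = 1) :
    (x + t • (f * d)) * (a - f * d * g) = (a - f * d * g) * x := by
  have hd : x * d - d * x + s • (d * f * d) = 0 :=
    calc _ = d * (s • f - (x * y - y * x)) * d := by
          simp only [mul_sub, sub_mul, mul_smul_comm, smul_mul_assoc, mul_assoc, hyd]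
          simp only [← mul_assoc, hdy]
          noncomm_ring
      _ = 0 := by rw [hy, sub_self, mul_zero, zero_mul]
  have key : (x + t • (f * d)) * (a - f * d * g) - (a - f * d * g) * x =
      (x * a - a * x + t • f) - (x * f - (s * t) • (f * x)) * d * g
        - (s * t) • (f * (x * d - d * x + s • (d * f * d)) * g)
        - (s * t) • (f * d * (x * g - (s * t) • (g * x) - s • (a - y)))
        + t • (f * (d * y - 1)) := by
    rcases Int.units_eq_one_or s with rfl | rfl <;> rcases Int.units_eq_one_or t with rfl | rfl <;>
      simp only [one_smul, Units.neg_smul, mul_one, neg_neg, mul_sub, sub_mul, mul_add, add_mul,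
        mul_neg, neg_mul, neg_sub, mul_assoc] <;>
      abel
  rw [← sub_eq_zero, key, ha, hf, hg, hd, hdy]
  simp only [neg_add_cancel, sub_self, mul_zero, zero_mul, smul_zero, add_zero]

theorem quasidet_mul_of_commutators {R : Type*} [Ring R] {s t : ℤˣ} {x a f g y d : R}
    (ha : a * x - x * a = -(t • g)) (hg : g * x - (s * t) • (x * g) = 0)
    (hf : f * x - (s * t) • (x * f) = s • (a - y)) (hy : y * x - x * y = s • g)
    (hdy : d * y = 1) (hyd : y * d = 1) :
    (a - f * d * g) * (x + t • (d * g)) = x * (a - f * d * g) := by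
  simpa only [MulOpposite.op_inj, ← MulOpposite.op_mul, ← MulOpposite.op_sub,
    ← MulOpposite.op_add, ← MulOpposite.op_smul, mul_assoc] using
    mul_quasidet_of_commutators (x := .op x) (a := .op a) (f := .op g) (g := .op f) (y := .op y)
      (d := .op d) (congrArg MulOpposite.op ha) (congrArg MulOpposite.op hg)
      (congrArg MulOpposite.op hf) (congrArg MulOpposite.op hy) (congrArg MulOpposite.op hyd)
      (congrArg MulOpposite.op hdy)

variable {ι R : Type*} [Fintype ι] [DecidableEq ι] [Ring R] {p : ι → ℕ} {E Y : Matrix ι ι R}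
  {a b : ι}

/-- The quasideterminant of the submatrix of `Y` on the indices `a`, `b`, at the position `a`,
`a`. -/
def quasidet (Y : Matrix ι ι R) (a b : ι) : R :=
  Y a a - Y a b * (Y b b)⁻¹ʳ * Y b a

theorem SuperCovariant.mul_diag_sub (h : SuperCovariant p E Y) (hab : a ≠ b) :
    E a b * Y b b - Y b b * E a b = (-1 : ℤˣ) ^ p b • Y a b := by
  have := superCovariant_iff.1 h a b b b
  rcases Nat.even_or_odd (p a) with ha | ha <;> rcases Nat.even_or_odd (p b) with hb | hb <;>
    simpa [pow_add, pow_mul, hab, ha.neg_one_pow, hb.neg_one_pow] using this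

theorem SuperCovariant.diag_mul_sub (h : SuperCovariant p E Y) (hab : a ≠ b) :
    Y b b * E b a - E b a * Y b b = (-1 : ℤˣ) ^ p b • Y b a := by
  have := superCovariant_iff.1 h b a b b
  rw [← neg_sub, neg_eq_iff_eq_neg]
  rcases Nat.even_or_odd (p a) with ha | ha <;> rcases Nat.even_or_odd (p b) with hb | hb <;>
    simpa [pow_add, pow_mul, hab, ha.neg_one_pow, hb.neg_one_pow] using this

theorem SuperCovariant.mul_quasidet (h : SuperCovariant p E Y) (hab : a ≠ b)
    (hY : IsUnit (Y b b)) :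
    (E a b + (-1 : ℤˣ) ^ p a • (Y a b * (Y b b)⁻¹ʳ)) * quasidet Y a b =
      quasidet Y a b * E a b := by
  refine mul_quasidet_of_commutators (s := (-1) ^ p b) ?_ ?_ ?_ (h.mul_diag_sub hab)
    (Ring.inverse_mul_cancel _ hY) (Ring.mul_inverse_cancel _ hY)
  · rw [← h.diag_mul_sub hab.symm, neg_sub]
  · have := superCovariant_iff.1 h a b a b
    rcases Nat.even_or_odd (p a) with ha | ha <;> rcases Nat.even_or_odd (p b) with hb | hb <;>
      simpa [pow_add, pow_mul, hab, hab.symm, ha.neg_one_pow, hb.neg_one_pow] using this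
  · have := superCovariant_iff.1 h a b b a
    rcases Nat.even_or_odd (p a) with ha | ha <;> rcases Nat.even_or_odd (p b) with hb | hb <;>
      simpa [pow_add, pow_mul, ha.neg_one_pow, hb.neg_one_pow] using this

theorem SuperCovariant.quasidet_mul (h : SuperCovariant p E Y) (hab : a ≠ b)
    (hY : IsUnit (Y b b)) :
    quasidet Y a b * (E b a + (-1 : ℤˣ) ^ p a • ((Y b b)⁻¹ʳ * Y b a)) =
      E b a * quasidet Y a b := by
  refine quasidet_mul_of_commutators (s := (-1) ^ p b) ?_ ?_ ?_ (h.diag_mul_sub hab)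
    (Ring.inverse_mul_cancel _ hY) (Ring.mul_inverse_cancel _ hY)
  · rw [← h.mul_diag_sub hab.symm, neg_sub]
  · have := superCovariant_iff.1 h b a b a
    rcases Nat.even_or_odd (p a) with ha | ha <;> rcases Nat.even_or_odd (p b) with hb | hb <;>
      simp [pow_add, pow_mul, hab, hab.symm, ha.neg_one_pow, hb.neg_one_pow] at this ⊢ <;>
      grind
  · have := superCovariant_iff.1 h b a a b
    rcases Nat.even_or_odd (p a) with ha | ha <;> rcases Nat.even_or_odd (p b) with hb | hb <;>
      simp [pow_add, pow_mul, ha.neg_one_pow, hb.neg_one_pow] at this ⊢ <;>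
      grind

theorem SuperCovariant.commute_ringInverse_quasidet_mul (h : SuperCovariant p E Y) (hab : a ≠ b)
    (hp : (-1 : ℤˣ) ^ p b = -(-1) ^ p a) (hY : IsUnit (Y b b)) (hW : IsUnit (quasidet Y a b))
    (hc : Commute (quasidet Y a b) (Y b b)) :
    Commute (E a b) ((quasidet Y a b)⁻¹ʳ * Y b b) ∧
      Commute (E b a) ((quasidet Y a b)⁻¹ʳ * Y b b) := by
  have h₁ := h.mul_quasidet hab hY
  have h₂ := h.quasidet_mul hab hY
  have hab₁ := h.mul_diag_sub hab
  have hab₂ := h.diag_mul_sub hab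
  rw [hp, Units.neg_smul] at hab₁ hab₂
  have hc' := (commute_ringInverse hc.symm).eq
  set W := quasidet Y a b
  have hx₁ : E a b * W⁻¹ʳ = W⁻¹ʳ * (E a b + (-1 : ℤˣ) ^ p a • (Y a b * (Y b b)⁻¹ʳ)) := by
    rw [eq_comm, Ring.inverse_mul_eq_iff_eq_mul _ _ _ hW, ← mul_assoc,
      Ring.eq_mul_inverse_iff_mul_eq _ _ _ hW, h₁]
  have hx₂ : W⁻¹ʳ * E b a = (E b a + (-1 : ℤˣ) ^ p a • ((Y b b)⁻¹ʳ * Y b a)) * W⁻¹ʳ := by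
    rw [Ring.inverse_mul_eq_iff_eq_mul _ _ _ hW, ← mul_assoc,
      Ring.eq_mul_inverse_iff_mul_eq _ _ _ hW, h₂]
  constructor
  · calc E a b * (W⁻¹ʳ * Y b b)
        = W⁻¹ʳ * (E a b * Y b b + (-1 : ℤˣ) ^ p a • Y a b) := by
          rw [← mul_assoc, hx₁, mul_assoc, add_mul, smul_mul_assoc,
            Ring.inverse_mul_cancel_right _ _ hY]
      _ = W⁻¹ʳ * Y b b * E a b := by
          rw [mul_assoc, sub_eq_iff_eq_add.1 hab₁, neg_add_cancel_comm]
  · rw [← hc']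
    calc E b a * (Y b b * W⁻¹ʳ)
        = (Y b b * E b a + (-1 : ℤˣ) ^ p a • Y b a) * W⁻¹ʳ := by
          rw [← mul_assoc, sub_eq_iff_eq_add'.1 hab₂, neg_add_cancel_right]
      _ = Y b b * W⁻¹ʳ * E b a := by
          rw [mul_assoc, hx₂, ← mul_assoc, mul_add, mul_smul_comm,
            Ring.mul_inverse_cancel_left _ _ hY]

theorem IsSuperGL.commute_quasidet_mul (hE : IsSuperGL p E) {u v : R}
    (hu : ∀ x, Commute u x) (hv : ∀ x, Commute v x) (hU : IsUnit (u • 1 + E))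
    (hV : IsUnit (v • 1 + E)) (hab : a ≠ b) (hp : (-1 : ℤˣ) ^ p b = (-1) ^ p a)
    (h : u - v = (-1) ^ p b) (hY : IsUnit ((u • 1 + E)⁻¹ʳ b b))
    (hc : Commute (quasidet (u • 1 + E)⁻¹ʳ a b) ((v • 1 + E)⁻¹ʳ b b)) :
    Commute (E a b) (quasidet (u • 1 + E)⁻¹ʳ a b * (v • 1 + E)⁻¹ʳ b b) ∧
      Commute (E b a) (quasidet (u • 1 + E)⁻¹ʳ a b * (v • 1 + E)⁻¹ʳ b b) := by
  have hab₁ := (hE.superCovariant_resolvent hv).mul_diag_sub hab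
  have hab₂ := (hE.superCovariant_resolvent hv).diag_mul_sub hab
  have h₁ := (hE.superCovariant_resolvent hu).mul_quasidet hab hY
  have h₂ := (hE.superCovariant_resolvent hu).quasidet_mul hab hY
  have hx₁ := hE.resolvent_exchange hu hv hU hV h a b
  have hx₂ := hE.resolvent_exchange hu hv hU hV h b a
  set Y := (u • 1 + E)⁻¹ʳ
  set Z := (v • 1 + E)⁻¹ʳ
  set W := quasidet Y a b
  have hz₁ : Z b b * (Y a b * (Y b b)⁻¹ʳ) = Z a b := by
    rw [← mul_assoc, eq_comm, Ring.eq_mul_inverse_iff_mul_eq _ _ _ hY, ← sub_eq_zero]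
    linear_combination (norm := abel) -hx₁
  have hz₂ : (Y b b)⁻¹ʳ * Y b a * Z b b = Z b a := by
    rw [mul_assoc, Ring.inverse_mul_eq_iff_eq_mul _ _ _ hY, ← sub_eq_zero]
    linear_combination (norm := abel) -hx₂
  constructor
  · rw [hc.eq]
    calc E a b * (Z b b * W) = Z b b * (E a b + (-1 : ℤˣ) ^ p a • (Y a b * (Y b b)⁻¹ʳ)) * W := by
          rw [mul_add, mul_smul_comm, hz₁, ← hp, ← hab₁, add_sub_cancel, mul_assoc]
      _ = Z b b * W * E a b := by rw [mul_assoc, h₁, mul_assoc]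
  · calc E b a * (W * Z b b)
        = W * ((E b a + (-1 : ℤˣ) ^ p a • ((Y b b)⁻¹ʳ * Y b a)) * Z b b) := by
          rw [← mul_assoc, ← h₂, mul_assoc]
      _ = W * Z b b * E b a := by
          rw [add_mul, smul_mul_assoc, hz₂, ← hp, ← hab₂, add_sub_cancel, mul_assoc]

end RankTwo

section Centrality

theorem smul_one_add_submatrix {ι κ R : Type*} [DecidableEq ι] [DecidableEq κ] [Ring R]
    {E : Matrix ι ι R} (u : R) {f : κ → ι} (hf : f.Injective) :
    (u • 1 + E).submatrix f f = u • 1 + E.submatrix f f := by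
  rw [submatrix_add, submatrix_smul]
  simp only [Pi.add_apply, Pi.smul_apply, submatrix_one _ hf]

variable {ι R : Type*} [Fintype ι] [DecidableEq ι] [Ring R] {p : ι → ℕ} {E Y : Matrix ι ι R}

/-- The contribution to the Berezinian of a diagonal entry `x` of the inverse matrix, at an index
of parity `d`. -/
def berFactor (d : ℕ) (x : R) : R :=
  if Even d then x⁻¹ʳ else x

theorem commute_berFactor {x y : R} (d : ℕ) (h : Commute x y) : Commute x (berFactor d y) := by
  unfold berFactor
  split_ifs
  exacts [commute_ringInverse h, h]

theorem IsSuperGL.commute_berFactor_mul_berFactor (hE : IsSuperGL p E) {u v : R}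
    (hu : ∀ x, Commute u x) (hv : ∀ x, Commute v x) (hU : IsUnit (u • 1 + E))
    (hV : IsUnit (v • 1 + E)) {a b : ι} (hab : a ≠ b)
    (h : u - v = if Even (p a) ↔ Even (p b) then (-1) ^ p a else 0)
    (hY : IsUnit ((u • 1 + E)⁻¹ʳ b b)) (hW : IsUnit (quasidet (u • 1 + E)⁻¹ʳ a b))
    (hc : Commute (quasidet (u • 1 + E)⁻¹ʳ a b) ((v • 1 + E)⁻¹ʳ b b)) :
    Commute (E a b) (berFactor (p a) (quasidet (u • 1 + E)⁻¹ʳ a b) *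
        berFactor (p b) ((v • 1 + E)⁻¹ʳ b b)) ∧
      Commute (E b a) (berFactor (p a) (quasidet (u • 1 + E)⁻¹ʳ a b) *
        berFactor (p b) ((v • 1 + E)⁻¹ʳ b b)) := by
  set W := quasidet (u • 1 + E)⁻¹ʳ a b with hWdef
  set z := (v • 1 + E)⁻¹ʳ b b with hz
  by_cases hp : Even (p a) ↔ Even (p b)
  · have key := hE.commute_quasidet_mul hu hv hU hV hab (neg_one_pow_congr hp.symm)
      (by rw [h, if_pos hp, neg_one_pow_congr hp]) hY hc
    rw [← hWdef, ← hz] at key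
    by_cases ha : Even (p a)
    · rw [berFactor, berFactor, if_pos ha, if_pos (hp.1 ha), hc.ringInverse_ringInverse.eq,
        ← Ring.inverse_mul (.inl hW)]
      exact key.imp commute_ringInverse commute_ringInverse
    · rwa [berFactor, berFactor, if_neg ha, if_neg (hp.not.1 ha)]
  · obtain rfl : u = v := sub_eq_zero.1 (h.trans (if_neg hp))
    have hsign : (-1 : ℤˣ) ^ p b = -(-1) ^ p a := by
      rw [← neg_one_mul ((-1 : ℤˣ) ^ p a), ← pow_succ']
      exact neg_one_pow_congr (by rw [Nat.even_add_one]; tauto)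
    have key := (hE.superCovariant_resolvent hu).commute_ringInverse_quasidet_mul hab hsign hY hW hc
    rw [← hWdef, ← hz] at key
    by_cases ha : Even (p a)
    · rwa [berFactor, berFactor, if_pos ha, if_neg (by tauto)]
    · rw [berFactor, berFactor, if_neg ha, if_pos (by tauto), (commute_ringInverse hc).eq,
        ← Ring.inverse_inverse hW, ← Ring.inverse_mul (.inl hW.ringInverse)]
      exact key.imp commute_ringInverse commute_ringInverse

theorem SuperCovariant.commute_diag (h : SuperCovariant p E Y) {i j b : ι} (hij : i = b ↔ j = b) :
    Commute (E i j) (Y b b) := by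
  rw [commute_iff_eq, ← sub_eq_zero]
  have hb := superCovariant_iff.1 h i j b b
  rw [(Even.add_self (p b)).mul_left _ |>.neg_one_pow, one_smul] at hb
  by_cases hj : j = b
  · obtain rfl := hj
    obtain rfl := hij.2 rfl
    rw [hb, sub_self, smul_zero]
  · rw [hb, if_neg hj, if_neg (hij.not.2 hj), sub_self, smul_zero]

theorem IsSuperGL.commute_superScalar_submatrix (hE : IsSuperGL p E) {κ : Type*} [Fintype κ]
    [DecidableEq κ] {f : κ → ι} {i j : ι} (hi : ∀ k, i ≠ f k) (hj : ∀ k, j ≠ f k) :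
    Commute (superScalar (p ∘ f) (p i + p j) (E i j)) (E.submatrix f f) :=
  commute_superScalar_iff.2 fun k l => by
    simpa only [hj, hi, if_false, sub_self, smul_zero, sub_eq_zero, submatrix_apply,
      Function.comp_apply] using
      superCovariant_iff.1 hE i j (f k) (f l)

theorem IsSuperGL.commute_of_commute (hE : IsSuperGL p E) {i a b : ι} (hib : i ≠ b) {z : R}
    (hia : Commute (E i a) z) (hab : Commute (E a b) z) : Commute (E i b) z := by
  have := superCovariant_iff.1 hE i a a b
  rw [if_pos rfl, if_neg hib, sub_zero, ← inv_smul_eq_iff] at this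
  rw [← this]
  exact (((hia.mul_left hab).sub_left ((hab.mul_left hia).smul_left _))).smul_left _

theorem commute_resolvent_apply_self {d : ℕ} {x u : R} (hu : ∀ y, Commute u y)
    (h : Commute (superScalar p d x) E) (i : ι) : Commute x ((u • 1 + E)⁻¹ʳ i i) := by
  simpa only [(Even.add_self (p i)).mul_left d |>.neg_one_pow, one_smul, commute_iff_eq] using
    commute_superScalar_iff.1 (commute_resolvent hu h) i i

variable {N : ℕ}

/-- The Berezinian of the matrix `u + E`, where the spectral parameter `u` may vary with the step
of the Gauss decomposition: the product over the leading principal submatrices of the (inverse)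
last diagonal entries of their inverses. -/
def gaussBerezinian : {N : ℕ} → (Fin N → ℕ) → (Fin N → R) → Matrix (Fin N) (Fin N) R → R
  | 0, _, _, _ => 1
  | N + 1, p, u, E =>
    gaussBerezinian (p ∘ Fin.castSucc) (u ∘ Fin.castSucc) (E.submatrix Fin.castSucc Fin.castSucc) *
      berFactor (p (Fin.last N)) ((u (Fin.last N) • 1 + E)⁻¹ʳ (Fin.last N) (Fin.last N))

/-- A spectral parameter for `E`: a central element `u` such that `u + E'` is invertible for all
principal submatrices `E'` of `E`. -/
structure IsSpectralParam (E : Matrix (Fin N) (Fin N) R) (u : R) : Prop where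
  commute : ∀ x, Commute u x
  isUnit_submatrix : ∀ {k : ℕ} (f : Fin k → Fin N), f.Injective →
    IsUnit (u • 1 + E.submatrix f f)

theorem IsSpectralParam.isUnit {E : Matrix (Fin N) (Fin N) R} {u : R} (h : IsSpectralParam E u) :
    IsUnit (u • 1 + E) :=
  h.isUnit_submatrix id Function.injective_id

theorem IsSpectralParam.submatrix {E : Matrix (Fin N) (Fin N) R} {u : R} (h : IsSpectralParam E u)
    {k : ℕ} {f : Fin k → Fin N} (hf : f.Injective) : IsSpectralParam (E.submatrix f f) u :=
  ⟨h.commute, fun g hg => h.isUnit_submatrix (f ∘ g) (hf.comp hg)⟩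

theorem IsSpectralParam.isUnit_resolvent_last {E : Matrix (Fin (N + 1)) (Fin (N + 1)) R} {u : R}
    (h : IsSpectralParam E u) : IsUnit ((u • 1 + E)⁻¹ʳ (Fin.last N) (Fin.last N)) :=
  (isUnit_ringInverse_last_last h.isUnit
    (by rw [smul_one_add_submatrix u (Fin.castSucc_injective N)]
        exact h.isUnit_submatrix _ (Fin.castSucc_injective N))).1

theorem IsSpectralParam.resolvent_submatrix_last {E : Matrix (Fin (N + 2)) (Fin (N + 2)) R} {u : R}
    (h : IsSpectralParam E u) :
    (u • 1 + E.submatrix Fin.castSucc Fin.castSucc)⁻¹ʳ (Fin.last N) (Fin.last N) =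
      quasidet (u • 1 + E)⁻¹ʳ (Fin.last N).castSucc (Fin.last (N + 1)) := by
  have hsub := smul_one_add_submatrix (E := E) u (Fin.castSucc_injective (N + 1))
  rw [← hsub]
  exact (isUnit_ringInverse_last_last h.isUnit
    (by rw [hsub]; exact h.isUnit_submatrix _ (Fin.castSucc_injective _))).2 _ _

/-- The sequences of spectral parameters for which `gaussBerezinian` is central. -/
structure IsSpectralSequence (p : Fin N → ℕ) (E : Matrix (Fin N) (Fin N) R) (u : Fin N → R) :
    Prop where
  isSpectralParam : ∀ a, IsSpectralParam E (u a)
  sub_eq : ∀ a b : Fin N, (b : ℕ) = a + 1 →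
    u a - u b = if Even (p a) ↔ Even (p b) then (-1) ^ p a else 0

theorem IsSpectralSequence.castAdd {m n : ℕ} {p : Fin (m + n) → ℕ}
    {E : Matrix (Fin (m + n)) (Fin (m + n)) R} {u : Fin (m + n) → R}
    (h : IsSpectralSequence p E u) :
    IsSpectralSequence (p ∘ Fin.castAdd n) (E.submatrix (Fin.castAdd n) (Fin.castAdd n))
      (u ∘ Fin.castAdd n) :=
  ⟨fun a => (h.isSpectralParam (a.castAdd n)).submatrix (Fin.castAdd_injective m n),
    fun a b => h.sub_eq (a.castAdd n) (b.castAdd n)⟩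

theorem IsSpectralSequence.castSucc {p : Fin (N + 1) → ℕ}
    {E : Matrix (Fin (N + 1)) (Fin (N + 1)) R} {u : Fin (N + 1) → R}
    (h : IsSpectralSequence p E u) :
    IsSpectralSequence (p ∘ Fin.castSucc) (E.submatrix Fin.castSucc Fin.castSucc)
      (u ∘ Fin.castSucc) :=
  h.castAdd

theorem commute_gaussBerezinian_of_superScalar {d : ℕ} {x : R} {p : Fin N → ℕ} {u : Fin N → R}
    (hu : ∀ a y, Commute (u a) y) {E : Matrix (Fin N) (Fin N) R}
    (h : Commute (superScalar p d x) E) : Commute x (gaussBerezinian p u E) := by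
  induction N with
  | zero => exact Commute.one_right x
  | succ N ih =>
    refine (ih (fun a => hu _) ?_).mul_right
      (commute_berFactor _ (commute_resolvent_apply_self (hu _) h _))
    exact commute_superScalar_iff.2 fun k l => commute_superScalar_iff.1 h k.castSucc l.castSucc

theorem IsSuperGL.commute_gaussBerezinian_last {p : Fin (N + 2) → ℕ}
    {E : Matrix (Fin (N + 2)) (Fin (N + 2)) R} (hE : IsSuperGL p E) {u : Fin (N + 2) → R}
    (hu : IsSpectralSequence p E u) :
    Commute (E (Fin.last N).castSucc (Fin.last (N + 1))) (gaussBerezinian p u E) ∧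
      Commute (E (Fin.last (N + 1)) (Fin.last N).castSucc) (gaussBerezinian p u E) := by
  set a := (Fin.last N).castSucc
  set b := Fin.last (N + 1) with hb
  have hua := hu.isSpectralParam a
  have hub := hu.isSpectralParam b
  have hW := hua.resolvent_submatrix_last
  have hcomm : Commute (quasidet (u a • 1 + E)⁻¹ʳ a b) ((u b • 1 + E)⁻¹ʳ b b) := by
    rw [← hW]
    refine (commute_resolvent_apply_self (p := p ∘ Fin.castSucc) (d := 0) hua.commute ?_ _).symm
    refine commute_superScalar_iff.2 fun k l => ?_
    rw [zero_mul, pow_zero, one_smul]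
    exact ((hE.superCovariant_resolvent hub.commute).commute_diag (i := k.castSucc)
      (j := l.castSucc) (b := b) (by simp only [hb, Fin.castSucc_ne_last])).symm
  have hpair := hE.commute_berFactor_mul_berFactor hua.commute hub.commute hua.isUnit hub.isUnit
    (Fin.castSucc_ne_last _) (hu.sub_eq a b rfl) hua.isUnit_resolvent_last
    (hW ▸ (hua.submatrix (Fin.castSucc_injective _)).isUnit_resolvent_last) hcomm
  have hinit {i j : Fin (N + 2)} (hi : ∀ k : Fin N, i ≠ k.castSucc.castSucc)
      (hj : ∀ k : Fin N, j ≠ k.castSucc.castSucc) :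
      Commute (E i j) (gaussBerezinian (p ∘ Fin.castSucc ∘ Fin.castSucc)
        (u ∘ Fin.castSucc ∘ Fin.castSucc)
        (E.submatrix (Fin.castSucc ∘ Fin.castSucc) (Fin.castSucc ∘ Fin.castSucc))) :=
    commute_gaussBerezinian_of_superScalar (fun _ => (hu.isSpectralParam _).commute)
      (hE.commute_superScalar_submatrix hi hj)
  have ha' (k : Fin N) : a ≠ k.castSucc.castSucc := fun h =>
    k.castSucc_ne_last (Fin.castSucc_injective _ h).symm
  have hb' (k : Fin N) : b ≠ k.castSucc.castSucc := (Fin.castSucc_ne_last _).symm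
  have hber : gaussBerezinian p u E = gaussBerezinian (p ∘ Fin.castSucc ∘ Fin.castSucc)
      (u ∘ Fin.castSucc ∘ Fin.castSucc)
      (E.submatrix (Fin.castSucc ∘ Fin.castSucc) (Fin.castSucc ∘ Fin.castSucc)) *
        (berFactor (p a) (quasidet (u a • 1 + E)⁻¹ʳ a b) *
          berFactor (p b) ((u b • 1 + E)⁻¹ʳ b b)) := by
    rw [← hW, ← mul_assoc]
    rfl
  rw [hber]
  exact ⟨(hinit ha' hb').mul_right hpair.1, (hinit hb' ha').mul_right hpair.2⟩

theorem IsSuperGL.commute_gaussBerezinian {p : Fin N → ℕ} {E : Matrix (Fin N) (Fin N) R}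
    (hE : IsSuperGL p E) {u : Fin N → R} (hu : IsSpectralSequence p E u) (i j : Fin N) :
    Commute (E i j) (gaussBerezinian p u E) := by
  induction N with
  | zero => exact i.elim0
  | succ N ih =>
    have hlast := (hu.isSpectralParam (Fin.last N)).commute
    have hmain (k l : Fin N) : Commute (E k.castSucc l.castSucc) (gaussBerezinian p u E) :=
      (ih (hE.submatrix (Fin.castSucc_injective N)) hu.castSucc k l).mul_right
        (commute_berFactor _ ((hE.superCovariant_resolvent hlast).commute_diag
          (by simp only [Fin.castSucc_ne_last])))
    cases N with
    | zero =>
      rw [Subsingleton.elim (α := Fin 1) i (Fin.last 0),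
        Subsingleton.elim (α := Fin 1) j (Fin.last 0)]
      exact (Commute.one_right _).mul_right
        (commute_berFactor _ ((hE.superCovariant_resolvent hlast).commute_diag Iff.rfl))
    | succ N =>
      obtain ⟨hright, hleft⟩ := hE.commute_gaussBerezinian_last hu
      cases i using Fin.lastCases with
      | last =>
        cases j using Fin.lastCases with
        | last =>
          exact (commute_gaussBerezinian_of_superScalar
            (fun a => (hu.castSucc.isSpectralParam a).commute)
            (hE.commute_superScalar_submatrix (fun k => (Fin.castSucc_ne_last k).symm)
              fun k => (Fin.castSucc_ne_last k).symm)).mul_right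
            (commute_berFactor _ ((hE.superCovariant_resolvent hlast).commute_diag Iff.rfl))
        | cast j =>
          exact hE.commute_of_commute (Fin.castSucc_ne_last j).symm hleft (hmain _ j)
      | cast i =>
        cases j using Fin.lastCases with
        | last => exact hE.commute_of_commute (Fin.castSucc_ne_last i) (hmain i _) hright
        | cast j => exact hmain i j

end Centrality

section AlternatingProducts

variable {κ R : Type*} [Ring R] {N : ℕ}

theorem exists_prod_ofFn_eq {M : Type*} [Monoid M] (t : Fin N) (g₀ : Fin (N + 1) → M) :
    ∃ x y : M, ∀ g : Fin (N + 1) → M, (∀ i, i ≠ t.castSucc → i ≠ t.succ → g i = g₀ i) →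
      (List.ofFn g).prod = x * (g t.castSucc * g t.succ) * y := by
  induction N with
  | zero => exact t.elim0
  | succ N ih =>
    cases t using Fin.cases with
    | zero =>
      refine ⟨1, (List.ofFn fun i : Fin N => g₀ i.succ.succ).prod, fun g hg => ?_⟩
      have htail : (fun i : Fin N => g i.succ.succ) = fun i => g₀ i.succ.succ :=
        funext fun i => hg _ (Fin.succ_ne_zero _) ((Fin.succ_injective _).ne (Fin.succ_ne_zero i))
      rw [List.ofFn_succ, List.ofFn_succ, List.prod_cons, List.prod_cons, htail, one_mul, mul_assoc]
      rfl
    | succ t =>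
      obtain ⟨x, y, hxy⟩ := ih t (g₀ ∘ Fin.succ)
      refine ⟨g₀ 0 * x, y, fun g hg => ?_⟩
      rw [List.ofFn_succ, List.prod_cons,
        hxy (fun i => g i.succ) fun i h₁ h₂ => hg _ ((Fin.succ_injective _).ne h₁)
          ((Fin.succ_injective _).ne h₂),
        hg 0 (Fin.castSucc_ne_zero_iff.2 (Fin.succ_ne_zero t)).symm (Fin.succ_ne_zero _).symm]
      simp only [mul_assoc, Fin.succ_castSucc]

/-- The alternating sum over all permutations of the positions, where the `t`-th factor is taken
from the row `c t` of the `t`-th matrix. For `c = id` these are the column determinant (of the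
transposed matrices) and the row determinant. -/
def alternatingProd (B : Fin N → Matrix κ (Fin N) R) (c : Fin N → κ) : R :=
  ∑ σ : Equiv.Perm (Fin N), Equiv.Perm.sign σ • (List.ofFn fun t => B t (c t) (σ t)).prod

theorem alternatingProd_comp_swap {B : Fin (N + 1) → Matrix κ (Fin (N + 1)) R} {t : Fin N}
    (hB : IsManinPair (B t.castSucc) (B t.succ)) (c : Fin (N + 1) → κ) :
    alternatingProd B (c ∘ Equiv.swap t.castSucc t.succ) = -alternatingProd B c := by
  set s := Equiv.swap t.castSucc t.succ
  have hne : t.castSucc ≠ t.succ := (Fin.castSucc_lt_succ).ne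
  rw [eq_neg_iff_add_eq_zero, alternatingProd, alternatingProd, ← Finset.sum_add_distrib]
  refine Finset.sum_involution (fun σ _ => σ * s) (fun σ _ => ?_)
    (fun σ _ _ h => hne (Equiv.swap_eq_one_iff.1 (mul_eq_left.1 h))) (fun _ _ => Finset.mem_univ _)
    fun σ _ => Equiv.mul_swap_mul_self _ _ _
  obtain ⟨x, y, hxy⟩ := exists_prod_ofFn_eq t fun i => B i (c i) (σ i)
  have hs {i : Fin (N + 1)} (h₁ : i ≠ t.castSucc) (h₂ : i ≠ t.succ) : s i = i :=
    Equiv.swap_apply_of_ne_of_ne h₁ h₂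
  have hminor : B t.castSucc (c t.succ) (σ t.castSucc) * B t.succ (c t.castSucc) (σ t.succ) +
      B t.castSucc (c t.castSucc) (σ t.castSucc) * B t.succ (c t.succ) (σ t.succ) =
      B t.castSucc (c t.succ) (σ t.succ) * B t.succ (c t.castSucc) (σ t.castSucc) +
      B t.castSucc (c t.castSucc) (σ t.succ) * B t.succ (c t.succ) (σ t.castSucc) := by
    have := hB (c t.castSucc) (c t.succ) (σ t.castSucc) (σ t.succ)
    grind
  rw [← smul_add, ← smul_add, Equiv.Perm.sign_mul, Equiv.Perm.sign_swap hne, mul_neg, mul_one,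
    Units.neg_smul, ← sub_eq_add_neg, ← smul_sub]
  convert smul_zero _
  rw [sub_eq_zero]
  rw [hxy, hxy, hxy, hxy]
  · simp only [Function.comp_apply, Equiv.Perm.mul_apply, s, Equiv.swap_apply_left,
      Equiv.swap_apply_right]
    rw [← add_mul, ← mul_add, ← add_mul, ← mul_add, hminor]
  all_goals
    intro i h₁ h₂
    simp only [Function.comp_apply, Equiv.Perm.mul_apply, hs h₁ h₂]

theorem alternatingProd_comp_perm {B : Fin N → Matrix κ (Fin N) R}
    (hB : ∀ s t : Fin N, (t : ℕ) = s + 1 → IsManinPair (B s) (B t)) (π : Equiv.Perm (Fin N))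
    (c : Fin N → κ) : alternatingProd B (c ∘ π) = Equiv.Perm.sign π • alternatingProd B c := by
  cases N with
  | zero => rw [Subsingleton.elim (c ∘ π) c, Subsingleton.elim π 1, Equiv.Perm.sign_one, one_smul]
  | succ N =>
    have hπ : π ∈ Submonoid.closure (Set.range fun i : Fin N => Equiv.swap i.castSucc i.succ) :=
      Equiv.Perm.mclosure_swap_castSucc_succ N ▸ Submonoid.mem_top π
    induction hπ using Submonoid.closure_induction generalizing c with
    | mem π hπ =>
      obtain ⟨t, rfl⟩ := hπ
      rw [alternatingProd_comp_swap (hB _ _ t.val_succ), Equiv.Perm.sign_swap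
        Fin.castSucc_lt_succ.ne, Units.neg_smul, one_smul]
    | one => rw [Equiv.Perm.coe_one, Function.comp_id, Equiv.Perm.sign_one, one_smul]
    | mul π τ _ _ hπ hτ =>
      rw [Equiv.Perm.coe_mul, ← Function.comp_assoc, hτ, hπ, smul_smul, Equiv.Perm.sign_mul,
        mul_comm]

theorem alternatingProd_eq_zero [IsAddTorsionFree R] {B : Fin N → Matrix κ (Fin N) R}
    (hB : ∀ s t : Fin N, (t : ℕ) = s + 1 → IsManinPair (B s) (B t)) {c : Fin N → κ} {a b : Fin N}
    (hab : a ≠ b) (hc : c a = c b) : alternatingProd B c = 0 := by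
  have h := alternatingProd_comp_perm hB (Equiv.swap a b) c
  have hcomp : c ∘ Equiv.swap a b = c := by
    rw [Equiv.comp_swap_eq_update, hc, Function.update_eq_self, ← hc, Function.update_eq_self]
  rw [hcomp, Equiv.Perm.sign_swap hab, Units.neg_smul, one_smul] at h
  exact self_eq_neg.1 h

theorem alternatingProd_update_id [IsAddTorsionFree R] {B : Fin N → Matrix (Fin N) (Fin N) R}
    (hB : ∀ s t : Fin N, (t : ℕ) = s + 1 → IsManinPair (B s) (B t)) (a l : Fin N) :
    alternatingProd B (Function.update id a l) = if l = a then alternatingProd B id else 0 := by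
  split_ifs with hl
  · rw [hl, Function.update_eq_self_iff.2 (id_eq a).symm]
  · exact alternatingProd_eq_zero hB hl (by rw [Function.update_self, Function.update_of_ne hl, id])

theorem sum_perm_sign_smul_ite {M : Type*} [AddCommGroup M] (a : Fin (N + 1))
    (F : (Fin N → Fin (N + 1)) → M) :
    ∑ σ : Equiv.Perm (Fin (N + 1)),
        Equiv.Perm.sign σ • (if σ a = a then F (σ ∘ a.succAbove) else 0) =
      ∑ τ : Equiv.Perm (Fin N), Equiv.Perm.sign τ • F (a.succAbove ∘ τ) := by
  rw [← Equiv.sum_comp (finSuccEquiv' a).permCongr.symm,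
    ← Equiv.sum_comp Equiv.Perm.decomposeOption.symm, Fintype.sum_prod_type,
    Fintype.sum_eq_single none fun l hl => Finset.sum_eq_zero fun τ _ => ?_]
  · refine Finset.sum_congr rfl fun τ _ => ?_
    rw [if_pos (by simp), Equiv.permCongr_symm, Equiv.Perm.sign_permCongr,
      Equiv.Perm.decomposeOption_symm_sign]
    congr 2
    ext t
    simp
  · rw [if_neg, smul_zero]
    simpa [Equiv.symm_apply_eq] using hl

theorem alternatingProd_mul_of_last [IsAddTorsionFree R]
    {B : Fin (N + 1) → Matrix (Fin (N + 1)) (Fin (N + 1)) R}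
    (hB : ∀ s t : Fin (N + 1), (t : ℕ) = s + 1 → IsManinPair (B s) (B t)) {z : Fin (N + 1) → R}
    (hz : ∀ i, ∑ l, B (Fin.last N) l i * z l = if i = Fin.last N then 1 else 0) :
    alternatingProd B id * z (Fin.last N) =
      alternatingProd (fun t => (B t.castSucc).submatrix Fin.castSucc Fin.castSucc) id := by
  have hterm (σ : Equiv.Perm (Fin (N + 1))) :
      ∑ l, (List.ofFn fun t => B t (Function.update id (Fin.last N) l t) (σ t)).prod * z l =
        if σ (Fin.last N) = Fin.last N then
          (List.ofFn fun t : Fin N => B t.castSucc t.castSucc (σ t.castSucc)).prod else 0 := by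
    simp only [List.ofFn_succ', List.concat_eq_append, List.prod_append, List.prod_singleton,
      Function.update_self, ne_eq, Fin.castSucc_ne_last, not_false_eq_true, Function.update_of_ne,
      id, mul_assoc, ← Finset.mul_sum, hz, mul_ite, mul_one, mul_zero]
  calc alternatingProd B id * z (Fin.last N)
      = ∑ l, alternatingProd B (Function.update id (Fin.last N) l) * z l := by
        simp only [alternatingProd_update_id hB, ite_mul, zero_mul, Finset.sum_ite_eq',
          Finset.mem_univ, if_true]
    _ = ∑ σ : Equiv.Perm (Fin (N + 1)), Equiv.Perm.sign σ •
          (if σ (Fin.last N) = Fin.last N then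
            (List.ofFn fun t : Fin N => B t.castSucc t.castSucc (σ t.castSucc)).prod else 0) := by
        simp only [alternatingProd, Finset.sum_mul, smul_mul_assoc]
        rw [Finset.sum_comm]
        simp only [← Finset.smul_sum, hterm]
    _ = _ := by
        simpa only [Fin.succAbove_last, alternatingProd, submatrix_apply, id,
          Function.comp_apply] using sum_perm_sign_smul_ite (Fin.last N)
          fun f => (List.ofFn fun t : Fin N => B t.castSucc t.castSucc (f t)).prod

theorem alternatingProd_of_first [IsAddTorsionFree R]
    {B : Fin (N + 1) → Matrix (Fin (N + 1)) (Fin (N + 1)) R}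
    (hB : ∀ s t : Fin (N + 1), (t : ℕ) = s + 1 → IsManinPair (B s) (B t)) {z : Fin (N + 1) → R}
    (hz₀ : z 0 = 1) {q : R} (hz : ∀ i, ∑ l, z l * B 0 l i = if i = 0 then q else 0) :
    alternatingProd B id =
      q * alternatingProd (fun t => (B t.succ).submatrix Fin.succ Fin.succ) id := by
  have hterm (σ : Equiv.Perm (Fin (N + 1))) :
      ∑ l, z l * (List.ofFn fun t => B t (Function.update id 0 l t) (σ t)).prod =
        if σ 0 = 0 then q * (List.ofFn fun t : Fin N => B t.succ t.succ (σ t.succ)).prod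
        else 0 := by
    simp only [List.ofFn_succ, List.prod_cons, Function.update_self, ne_eq, Fin.succ_ne_zero,
      not_false_eq_true, Function.update_of_ne, id, ← mul_assoc, ← Finset.sum_mul, hz, ite_mul,
      zero_mul]
  calc alternatingProd B id
      = ∑ l, z l * alternatingProd B (Function.update id 0 l) := by
        simp only [alternatingProd_update_id hB, mul_ite, mul_zero, Finset.sum_ite_eq',
          Finset.mem_univ, if_true, hz₀, one_mul]
    _ = ∑ σ : Equiv.Perm (Fin (N + 1)), Equiv.Perm.sign σ •
          (if σ 0 = 0 then
            q * (List.ofFn fun t : Fin N => B t.succ t.succ (σ t.succ)).prod else 0) := by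
        simp only [alternatingProd, Finset.mul_sum, mul_smul_comm]
        rw [Finset.sum_comm]
        simp only [← Finset.smul_sum, hterm]
    _ = _ := by
        simpa only [Fin.succAbove_zero, alternatingProd, submatrix_apply, id, Finset.mul_sum,
          mul_smul_comm, Function.comp_apply] using
          sum_perm_sign_smul_ite 0
            fun f => q * (List.ofFn fun t : Fin N => B t.succ t.succ (f t)).prod

end AlternatingProducts

section GaussDecomposition

variable {R : Type*} [Ring R] {N : ℕ}

theorem gaussBerezinian_eq_prod_ofFn (p : Fin N → ℕ) (u : Fin N → R)
    (E : Matrix (Fin N) (Fin N) R) :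
    gaussBerezinian p u E = (List.ofFn fun a : Fin N => berFactor (p a)
      ((u a • 1 + E.submatrix (Fin.castLE a.isLt) (Fin.castLE a.isLt))⁻¹ʳ
        (Fin.last a) (Fin.last a))).prod := by
  induction N with
  | zero => rfl
  | succ N ih =>
    rw [List.ofFn_succ', List.concat_eq_append, List.prod_append, List.prod_singleton,
      gaussBerezinian, ih]
    rfl

theorem IsSuperGL.isManinPair_transpose_of_succ {p : Fin N → ℕ} {E : Matrix (Fin N) (Fin N) R}
    (hE : IsSuperGL p E) {u : Fin N → R} (hu : IsSpectralSequence p E u) (hp : ∀ a, Even (p a))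
    {s t : Fin N} (hst : (t : ℕ) = s + 1) : IsManinPair (u s • 1 + E)ᵀ (u t • 1 + E)ᵀ := by
  have hut := hu.sub_eq s t hst
  rw [if_pos (iff_of_true (hp s) (hp t)), (hp s).neg_one_pow, sub_eq_iff_eq_add',
    ← sub_eq_iff_eq_add] at hut
  rw [← hut]
  exact hE.isManinPair_transpose (hu.isSpectralParam s).commute hp Function.injective_id

theorem IsSuperGL.isManinPair_resolvent_of_succ {p : Fin N → ℕ} {E : Matrix (Fin N) (Fin N) R}
    (hE : IsSuperGL p E) {u : Fin N → R} (hu : IsSpectralSequence p E u) {κ : Type*}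
    {f : κ → Fin N} (hp : ∀ k, Odd (p (f k))) {s t : κ} (hst : (f t : ℕ) = f s + 1) :
    IsManinPair ((u (f s) • 1 + E)⁻¹ʳ.submatrix f f) ((u (f t) • 1 + E)⁻¹ʳ.submatrix f f) := by
  have hut := hu.sub_eq (f s) (f t) hst
  rw [if_pos (iff_of_false (Nat.not_even_iff_odd.2 (hp s)) (Nat.not_even_iff_odd.2 (hp t))),
    (hp s).neg_one_pow, sub_eq_iff_eq_add', ← sub_eq_add_neg, eq_sub_iff_add_eq] at hut
  have ht := (hu.isSpectralParam (f t)).isUnit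
  rw [← hut] at ht ⊢
  exact hE.isManinPair_resolvent (hu.isSpectralParam _).commute (hu.isSpectralParam _).isUnit ht hp

theorem alternatingProd_eq_gaussBerezinian [IsAddTorsionFree R] {p : Fin N → ℕ}
    (hp : ∀ a, Even (p a)) {u : Fin N → R} {E : Matrix (Fin N) (Fin N) R} (hE : IsSuperGL p E)
    (hu : IsSpectralSequence p E u) :
    alternatingProd (fun t => (u t • 1 + E)ᵀ) id = gaussBerezinian p u E := by
  induction N with
  | zero => simp [alternatingProd, gaussBerezinian]
  | succ N ih =>
    have hlast := hu.isSpectralParam (Fin.last N)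
    have hinv := Ring.mul_inverse_cancel _ hlast.isUnit
    have hpeel := alternatingProd_mul_of_last
      (fun s t => hE.isManinPair_transpose_of_succ hu hp (s := s) (t := t))
      (z := fun l => (u (Fin.last N) • 1 + E)⁻¹ʳ l (Fin.last N)) fun i => by
        rw [← one_apply]
        exact congrFun₂ hinv i (Fin.last N)
    have hW := hlast.isUnit_resolvent_last
    have hinit := ih (p := p ∘ Fin.castSucc) (fun a => hp _)
      (hE.submatrix (Fin.castSucc_injective N)) hu.castSucc
    rw [gaussBerezinian, ← hinit, berFactor, if_pos (hp _), Ring.eq_mul_inverse_iff_mul_eq _ _ _ hW,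
      hpeel]
    simp only [← transpose_submatrix, smul_one_add_submatrix _ (Fin.castSucc_injective N),
      Function.comp_apply]

theorem exists_vecMul_ringInverse {ι κ : Type*} [Fintype ι] [DecidableEq ι] [Fintype κ]
    [DecidableEq κ] {X : Matrix ι ι R} (hX : IsUnit X) {g : κ → ι} (hg : g.Injective)
    (hXg : IsUnit (X.submatrix g g)) (k : κ) :
    ∃ z : ι → R, (∀ i, z (g i) = (1 : Matrix κ κ R) k i) ∧
      (∀ i, (z ᵥ* X⁻¹ʳ) (g i) = (X.submatrix g g)⁻¹ʳ k i) ∧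
      ∀ i ∉ Set.range g, (z ᵥ* X⁻¹ʳ) i = 0 := by
  have hz : ((X.submatrix g g)⁻¹ʳ k ᵥ* X.submatrix g id) ᵥ* X⁻¹ʳ =
      (X.submatrix g g)⁻¹ʳ k ᵥ* (1 : Matrix ι ι R).submatrix g id := by
    rw [vecMul_vecMul, ← Ring.mul_inverse_cancel X hX,
      submatrix_mul _ _ g id id Function.bijective_id, submatrix_id_id]
  refine ⟨(X.submatrix g g)⁻¹ʳ k ᵥ* X.submatrix g id, fun i => ?_, fun i => ?_, fun i hi => ?_⟩
  · rw [← Ring.inverse_mul_cancel _ hXg]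
    rfl
  · rw [hz]
    simp [vecMul, dotProduct, one_apply, hg.eq_iff]
  · rw [hz]
    simp only [vecMul, dotProduct, submatrix_apply, id, one_apply]
    exact Finset.sum_eq_zero fun j _ => by rw [if_neg fun h => hi ⟨j, h⟩, mul_zero]

theorem lt_or_mem_range_of_val_eq_add {m n : ℕ} (hN : m + n = N) {f : Fin n → Fin N}
    (hf : ∀ s, (f s : ℕ) = m + s) (j : Fin N) : (j : ℕ) < m ∨ j ∈ Set.range f := by
  refine or_iff_not_imp_left.2 fun h => ⟨⟨j - m, by omega⟩, Fin.ext ((hf _).trans ?_)⟩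
  exact Nat.add_sub_of_le (not_lt.1 h)

theorem alternatingProd_resolvent_eq_prod_ofFn [IsAddTorsionFree R] {p : Fin N → ℕ} {u : Fin N → R}
    {E : Matrix (Fin N) (Fin N) R} (hE : IsSuperGL p E) (hu : IsSpectralSequence p E u) {m n : ℕ}
    (hN : m + n = N) {f : Fin n → Fin N} (hf : ∀ s, (f s : ℕ) = m + s) (hp : ∀ s, Odd (p (f s))) :
    alternatingProd (fun t => (u (f t) • 1 + E)⁻¹ʳ.submatrix f f) id =
      (List.ofFn fun s => (u (f s) • 1 + E.submatrix (Fin.castLE (f s).isLt)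
        (Fin.castLE (f s).isLt))⁻¹ʳ (Fin.last (f s)) (Fin.last (f s))).prod := by
  induction n generalizing m with
  | zero => simp [alternatingProd]
  | succ n ih =>
    have hf' : f.Injective := fun s t h => Fin.ext (by have := hf s; have := hf t; omega)
    set a := f 0
    have ha : (a : ℕ) = m := hf 0
    set g : Fin (a + 1) → Fin N := Fin.castLE a.isLt
    have hg : g.Injective := Fin.castLE_injective _
    have hua := hu.isSpectralParam a
    have huag := hua.isUnit_submatrix g hg
    rw [← smul_one_add_submatrix _ hg] at huag
    obtain ⟨z, hz, hzg, hz'⟩ := exists_vecMul_ringInverse hua.isUnit hg huag (Fin.last a)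
    have hzf (i : Fin N) : ∑ s, z (f s) * (u a • 1 + E)⁻¹ʳ (f s) i = (z ᵥ* (u a • 1 + E)⁻¹ʳ) i := by
      refine Fintype.sum_of_injective f hf' _ _ (fun j hj => ?_) fun _ => rfl
      have hja : j < a :=
        ((lt_or_mem_range_of_val_eq_add hN hf j).resolve_right hj).trans_eq ha.symm
      rw [show j = g ⟨j, by omega⟩ from rfl, hz, one_apply_ne, zero_mul]
      exact fun h => hja.ne (Fin.ext (congrArg Fin.val h).symm)
    have htail := ih (m := m + 1) (f := f ∘ Fin.succ) (by omega)
      (fun s => by rw [Function.comp_apply, hf, Fin.val_succ]; ring) fun s => hp s.succ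
    rw [List.ofFn_succ, List.prod_cons, ← smul_one_add_submatrix _ hg,
      alternatingProd_of_first (z := z ∘ f)]
    · exact congrArg _ htail
    · exact fun s t hst => hE.isManinPair_resolvent_of_succ hu hp (by rw [hf, hf, hst, add_assoc])
    · exact (hz (Fin.last a)).trans (one_apply_eq _)
    · intro i
      refine (hzf (f i)).trans ?_
      split_ifs with hi
      · rw [hi]
        exact hzg (Fin.last a)
      · refine hz' _ ?_
        rintro ⟨k, hk⟩
        have hk' : (k : ℕ) = m + i := (congrArg Fin.val hk).trans (hf i)
        have := Fin.val_ne_zero_iff.2 hi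
        omega

theorem alternatingProd_mul_alternatingProd_eq_gaussBerezinian [IsAddTorsionFree R] {m n : ℕ}
    {p : Fin (m + n) → ℕ} (hp : ∀ s, Even (p (Fin.castAdd n s)))
    (hp' : ∀ t, Odd (p (Fin.natAdd m t))) {u : Fin (m + n) → R}
    {E : Matrix (Fin (m + n)) (Fin (m + n)) R} (hE : IsSuperGL p E)
    (hu : IsSpectralSequence p E u) :
    alternatingProd (fun s => (u (Fin.castAdd n s) • 1 +
        E.submatrix (Fin.castAdd n) (Fin.castAdd n))ᵀ) id *
      alternatingProd (fun t => (u (Fin.natAdd m t) • 1 + E)⁻¹ʳ.submatrix (Fin.natAdd m)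
        (Fin.natAdd m)) id = gaussBerezinian p u E := by
  have heven := alternatingProd_eq_gaussBerezinian hp (hE.submatrix (Fin.castAdd_injective m n))
    hu.castAdd
  have hodd := alternatingProd_resolvent_eq_prod_ofFn hE hu rfl (fun _ => rfl) hp'
  rw [gaussBerezinian_eq_prod_ofFn, List.ofFn_add, List.prod_append, hodd]
  refine congrArg₂ _ (heven.trans (gaussBerezinian_eq_prod_ofFn _ _ _)) ?_
  simp only [berFactor, if_neg (Nat.not_even_iff_odd.2 (hp' _))]

end GaussDecomposition

section LaurentSeries

variable {A : Type} [Ring A] {κ : Type*} [Fintype κ] [DecidableEq κ]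

theorem isUnit_one_add_X_mul_C (N : Matrix κ κ A) :
    IsUnit (1 + N.map fun a => PowerSeries.X * PowerSeries.C a) := by
  set XN := N.map fun a => PowerSeries.X * PowerSeries.C a with hXN
  set Y : Matrix κ κ (PowerSeries A) := of fun i j => PowerSeries.mk fun n => ((-N) ^ n) i j with hY
  have hleft : Y = 1 - XN * Y := by
    ext i j n
    cases n with
    | zero => simp [hXN, hY, mul_apply, one_apply, apply_ite PowerSeries.constantCoeff]
    | succ n => simp [hXN, hY, mul_apply, one_apply, mul_assoc, apply_ite (PowerSeries.coeff _),
        PowerSeries.coeff_succ_X_mul, pow_succ']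
  have hright : Y = 1 - Y * XN := by
    ext i j n
    cases n with
    | zero => simp [hXN, hY, mul_apply, one_apply, apply_ite PowerSeries.constantCoeff]
    | succ n => simp [hXN, hY, mul_apply, one_apply, ← mul_assoc, apply_ite (PowerSeries.coeff _),
        PowerSeries.X_mul, PowerSeries.coeff_succ_mul_X, pow_succ]
  exact ⟨⟨_, Y, by rw [add_mul, one_mul, ← eq_sub_iff_add_eq, ← hleft],
    by rw [mul_add, mul_one, ← eq_sub_iff_add_eq, ← hright]⟩, rfl⟩

theorem commute_Tv (x : TSer A) : Commute Tv x := by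
  ext k
  rw [Tv, HahnSeries.coeff_single_mul, HahnSeries.coeff_mul_single, one_mul, mul_one]

theorem isUnit_Tv : IsUnit (Tv : TSer A) := by
  refine ⟨⟨Tv, HahnSeries.single 1 1, ?_, ?_⟩, rfl⟩ <;>
    rw [Tv, HahnSeries.single_mul_single, one_mul] <;> rfl

theorem isUnit_Tv_smul_one_add_map_C (N : Matrix κ κ A) :
    IsUnit ((Tv : TSer A) • 1 + N.map (HahnSeries.C (Γ := ℤ))) := by
  have hN : (Tv : TSer A) • 1 + N.map (HahnSeries.C (Γ := ℤ)) = scalar κ (Tv : TSer A) *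
      (HahnSeries.ofPowerSeries ℤ A).mapMatrix
        (1 + N.map fun a => PowerSeries.X * PowerSeries.C a) := by
    rw [map_add, map_one, mul_add, mul_one, smul_one_eq_diagonal, scalar_apply, add_right_inj]
    ext i j : 2
    simp [diagonal_mul, Tv]
  rw [hN]
  exact (isUnit_Tv.map (scalar κ)).mul
    ((isUnit_one_add_X_mul_C N).map (HahnSeries.ofPowerSeries ℤ A).mapMatrix)

variable [Algebra ℂ A]

theorem commute_Tv_add_algebraMap (c : ℂ) (x : TSer A) : Commute (Tv + algebraMap ℂ (TSer A) c) x :=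
  (commute_Tv x).add_left (Algebra.commute_algebraMap_left c x)

theorem isSpectralParam_Tv_add_algebraMap (c : ℂ) {N : ℕ} (E : Matrix (Fin N) (Fin N) A) :
    IsSpectralParam (E.map (HahnSeries.C (Γ := ℤ))) (Tv + algebraMap ℂ (TSer A) c) := by
  refine ⟨commute_Tv_add_algebraMap c, fun {k} f _ => ?_⟩
  have hshift : (Tv + algebraMap ℂ (TSer A) c) • 1 + (E.map (HahnSeries.C (Γ := ℤ))).submatrix f f =
      (Tv : TSer A) • 1 + (algebraMap ℂ A c • 1 + E.submatrix f f).map (HahnSeries.C (Γ := ℤ)) := by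
    rw [Matrix.map_add _ (map_add _), add_smul, add_assoc, ← submatrix_map,
      Matrix.map_smul', Matrix.map_one _ (map_zero _) (map_one _), HahnSeries.algebraMap_apply]
    exact map_mul _
  rw [hshift]
  exact isUnit_Tv_smul_one_add_map_C _

end LaurentSeries

section Capelli

theorem IsSuperGL.map {ι R S : Type*} [Fintype ι] [DecidableEq ι] [Ring R] [Ring S] {p : ι → ℕ}
    {E : Matrix ι ι R} (hE : IsSuperGL p E) (f : R →+* S) : IsSuperGL p (E.map f) := by
  refine superCovariant_iff.2 fun i j k l => ?_
  have h := congrArg f (superCovariant_iff.1 hE i j k l)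
  simpa only [map_sub, map_mul, Units.smul_def, map_zsmul, apply_ite f, map_zero, map_apply] using h

theorem submatrix_ringInverse {ι κ R : Type*} [Fintype ι] [DecidableEq ι] [Fintype κ]
    [DecidableEq κ] [Ring R] (e : κ ≃ ι) (X : Matrix ι ι R) :
    X⁻¹ʳ.submatrix e e = (X.submatrix e e)⁻¹ʳ :=
  map_ringInverse (reindexRingEquiv R e.symm).toMulEquiv X

/-- The shifts of the spectral parameter in the Capelli Berezinian at `-T`. -/
def capelliShift {m n : ℕ} : Ind m n → ℂ :=
  Sum.elim (fun s => -s) fun t => t + 1 - m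

/-- The spectral parameters `T + c` of the Capelli Berezinian at `-T`, in the order of `Ind m n`. -/
def capelliParam (m n : ℕ) (A : Type) [Ring A] [Algebra ℂ A] (a : Fin (m + n)) : TSer A :=
  Tv + algebraMap ℂ (TSer A) (capelliShift (finSumFinEquiv.symm a))

variable {m n : ℕ} {A : Type} [Ring A] [Algebra ℂ A]

theorem capelliParam_castAdd (s : Fin m) :
    capelliParam m n A (Fin.castAdd n s) = Tv - algebraMap ℂ (TSer A) s := by
  rw [capelliParam, finSumFinEquiv_symm_apply_castAdd, capelliShift, Sum.elim_inl, map_neg,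
    sub_eq_add_neg]

theorem capelliParam_natAdd (t : Fin n) :
    capelliParam m n A (Fin.natAdd m t) = Tv + algebraMap ℂ (TSer A) (t + 1 - m) := by
  rw [capelliParam, finSumFinEquiv_symm_apply_natAdd, capelliShift, Sum.elim_inr]

theorem capelli_neg_Tv (E : Matrix (Ind m n) (Ind m n) (TSer A)) :
    capelli E (-Tv) =
      alternatingProd (fun t => (capelliParam m n A (Fin.castAdd n t) • 1 +
        E.submatrix Sum.inl Sum.inl)ᵀ) id *
      alternatingProd (fun t => (capelliParam m n A (Fin.natAdd m t) • 1 + E)⁻¹ʳ.submatrix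
        Sum.inr Sum.inr) id := by
  rw [capelli, alternatingProd, alternatingProd]
  congr! 7 with σ _ s τ _ t
  · rw [capelliParam_castAdd, transpose_apply, Matrix.add_apply, Matrix.smul_apply, one_apply]
    simp only [submatrix_apply, id, smul_eq_mul, mul_ite, mul_one, mul_zero,
      Algebra.algebraMap_eq_smul_one]
    split_ifs <;> abel
  · have hparam : capelliParam m n A (Fin.natAdd m t) =
        -(-Tv + (((m : ℂ) - ((t : ℕ) : ℂ)) - 1) • 1) := by
      rw [capelliParam_natAdd, Algebra.algebraMap_eq_smul_one, neg_add, neg_neg, ← neg_smul]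
      ring_nf
    rw [hparam, submatrix_apply, neg_smul _ (1 : Matrix _ _ _),
      neg_add_eq_sub (_ • (1 : Matrix _ _ _)), id]

theorem isSpectralSequence_capelliParam (E : Matrix (Fin (m + n)) (Fin (m + n)) A) :
    IsSpectralSequence (pI ∘ finSumFinEquiv.symm) (E.map (HahnSeries.C (Γ := ℤ)))
      (capelliParam m n A) := by
  refine ⟨fun a => isSpectralParam_Tv_add_algebraMap _ E, fun a b hab => ?_⟩
  cases a using Fin.addCases <;> cases b using Fin.addCases <;>
    simp only [capelliParam_castAdd, capelliParam_natAdd, Function.comp_apply,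
      finSumFinEquiv_symm_apply_castAdd, finSumFinEquiv_symm_apply_natAdd, pI, Sum.elim_inl,
      Sum.elim_inr, Fin.val_castAdd, Fin.val_natAdd] at hab ⊢
  case left.left => simp [hab]
  case left.right s t =>
    have ht : (t : ℕ) = 0 := by omega
    have hm : (m : ℂ) = s + 1 := by exact_mod_cast (by omega : m = s + 1)
    simp [ht, hm, sub_eq_add_neg]
  case right.left => omega
  case right.right s t =>
    rw [show (t : ℕ) = s + 1 by omega]
    simp

theorem capelli_eq_gaussBerezinian {E : Matrix (Ind m n) (Ind m n) A} (hE : IsSuperGL pI E) :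
    capelli (E.map (HahnSeries.C (Γ := ℤ))) (-Tv) =
      gaussBerezinian (pI ∘ finSumFinEquiv.symm) (capelliParam m n A)
        ((E.map (HahnSeries.C (Γ := ℤ))).submatrix finSumFinEquiv.symm finSumFinEquiv.symm) := by
  let : Module ℚ (TSer A) := Module.compHom _ (algebraMap ℚ ℂ)
  have := IsAddTorsionFree.of_module_rat (TSer A)
  rw [capelli_neg_Tv, ← alternatingProd_mul_alternatingProd_eq_gaussBerezinian]
  · simp only [← smul_one_add_submatrix _ finSumFinEquiv.symm.injective, ← submatrix_ringInverse,
      submatrix_submatrix, Function.comp_def, finSumFinEquiv_symm_apply_castAdd,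
      finSumFinEquiv_symm_apply_natAdd]
  · exact fun s => by simp [pI]
  · exact fun t => by simp [pI]
  · exact (hE.map _).submatrix finSumFinEquiv.symm.injective
  · exact isSpectralSequence_capelliParam (E.submatrix finSumFinEquiv.symm finSumFinEquiv.symm)

end Capelli

section UniversalEnveloping

variable {ι : Type} [DecidableEq ι] {p : ι → ℕ}

theorem neg_one_pow_units_smul {M : Type*} [AddCommGroup M] [Module ℂ M] (d : ℕ) (x : M) :
    (-1 : ℤˣ) ^ d • x = (-1 : ℂ) ^ d • x := by
  obtain h | h := Nat.even_or_odd d <;> simp [h.neg_one_pow]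

/-- The supercommutation relations of the matrix units `e_ij` of the general linear Lie
superalgebra with parity `p`. -/
def IsGLFamily {R : Type*} [Ring R] (p : ι → ℕ) (e : ι → ι → R) : Prop :=
  ∀ i j k l, e i j * e k l - (-1 : ℤˣ) ^ ((p i + p j) * (p k + p l)) • (e k l * e i j) =
    (if j = k then e i l else 0) -
      (-1 : ℤˣ) ^ ((p i + p j) * (p k + p l)) • if i = l then e k j else 0

theorem isGLFamily_gen (p : ι → ℕ) : IsGLFamily p (gen p) := by
  intro i j k l
  have h := RingQuot.mkAlgHom_rel ℂ (glRel.basic (p := p) i j k l)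
  simp only [map_sub, map_mul, map_smul, apply_ite (RingQuot.mkAlgHom ℂ (glRel ι p)), map_zero,
    eq_comm (a := l)] at h
  rw [neg_one_pow_units_smul, neg_one_pow_units_smul]
  exact h

theorem adjoin_range_gen : Algebra.adjoin ℂ (Set.range fun x : ι × ι => gen p x.1 x.2) = ⊤ := by
  rw [show (fun x : ι × ι => gen p x.1 x.2) = RingQuot.mkAlgHom ℂ (glRel ι p) ∘ FreeAlgebra.ι ℂ
    from rfl, Set.range_comp, ← AlgHom.map_adjoin, FreeAlgebra.adjoin_range_ι, Algebra.map_top,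
    AlgHom.range_eq_top]
  exact RingQuot.mkAlgHom_surjective ℂ _

theorem mem_center_of_commute_gen {z : UEA ι p} (hz : ∀ i j, Commute (gen p i j) z) :
    z ∈ Subalgebra.center ℂ (UEA ι p) := by
  have hle : Algebra.adjoin ℂ (Set.range fun x : ι × ι => gen p x.1 x.2) ≤
      Subalgebra.centralizer ℂ {z} := by
    refine Algebra.adjoin_le ?_
    rintro _ ⟨x, rfl⟩
    exact (Subalgebra.mem_centralizer_iff ℂ).2 fun y hy => hy ▸ (hz x.1 x.2).symm
  rw [adjoin_range_gen] at hle
  refine Subalgebra.mem_center_iff.2 fun y => ?_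
  exact ((Subalgebra.mem_centralizer_iff ℂ).1 (hle Algebra.mem_top) z rfl).symm

/-- The matrix `((-1)^|i| e_ij)` of a family `e`, such as the generators of `gl(m|n)`. -/
def superMatrix {R : Type*} [Ring R] (p : ι → ℕ) (e : ι → ι → R) : Matrix ι ι R :=
  of fun i j => (-1 : ℤˣ) ^ p i • e i j

theorem isSuperGL_superMatrix [Fintype ι] {R : Type*} [Ring R] {e : ι → ι → R}
    (he : IsGLFamily p e) :
    IsSuperGL p (superMatrix p e) := by
  refine superCovariant_iff.2 fun i j k l => ?_
  have hcomm : superMatrix p e i j * superMatrix p e k l -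
      (-1 : ℤˣ) ^ ((p i + p j) * (p k + p l)) • (superMatrix p e k l * superMatrix p e i j) =
      (-1 : ℤˣ) ^ (p i + p k) • (e i j * e k l -
        (-1 : ℤˣ) ^ ((p i + p j) * (p k + p l)) • (e k l * e i j)) := by
    simp only [superMatrix, of_apply, smul_mul_assoc, mul_smul_comm, smul_sub, smul_smul,
      ← pow_add]
    ring_nf
  rw [hcomm, he, smul_sub, smul_sub, smul_smul, ← pow_add]
  congr 1
  · split_ifs with hjk
    · subst hjk
      rw [superMatrix, of_apply, smul_smul, ← pow_add]
      exact congrArg (· • _) (neg_one_pow_congr (by simp only [Nat.even_add, Nat.even_mul]; tauto))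
    · simp only [smul_zero]
  · split_ifs with hil
    · subst hil
      rw [superMatrix, of_apply, smul_smul, ← pow_add]
      exact congrArg (· • _) (neg_one_pow_congr (by simp only [Nat.even_add, Nat.even_mul]; tauto))
    · simp only [smul_zero]

theorem scrE_eq_map_superMatrix {m n : ℕ} {A : Type} [Ring A] [Algebra ℂ A]
    (e : Ind m n → Ind m n → A) : scrE m n e =
      (superMatrix pI e).map (HahnSeries.C (Γ := ℤ)) := by
  ext i j : 2
  rw [scrE, map_apply, superMatrix, of_apply, neg_one_pow_units_smul]

theorem coeff_capelli_mem_center (m n : ℕ) (k : ℤ) :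
    (capelli (scrE m n (gen pI)) (-Tv)).coeff k ∈ Subalgebra.center ℂ (UEA (Ind m n) pI) := by
  have hE := isSuperGL_superMatrix (isGLFamily_gen (pI (m := m) (n := n)))
  refine mem_center_of_commute_gen fun i j => ?_
  have hcomm := IsSuperGL.commute_gaussBerezinian
    (hE := (hE.map (HahnSeries.C (Γ := ℤ))).submatrix finSumFinEquiv.symm.injective)
    (isSpectralSequence_capelliParam
      ((superMatrix pI (gen pI)).submatrix finSumFinEquiv.symm finSumFinEquiv.symm))
    (finSumFinEquiv i) (finSumFinEquiv j)
  rw [← capelli_eq_gaussBerezinian hE, ← scrE_eq_map_superMatrix, submatrix_apply,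
    Equiv.symm_apply_apply, Equiv.symm_apply_apply] at hcomm
  have hcoeff := congrArg (HahnSeries.coeff · k) hcomm.eq
  simp only [scrE, HahnSeries.C_apply, HahnSeries.coeff_single_zero_mul,
    HahnSeries.coeff_mul_single_zero] at hcoeff
  rw [smul_mul_assoc, mul_smul_comm] at hcoeff
  exact smul_right_injective _ (pow_ne_zero _ (neg_ne_zero.2 one_ne_zero)) hcoeff

end UniversalEnveloping

section HighestWeight

variable {R W : Type*} [Ring R] [AddCommGroup W] [Module R W] {w : W}

theorem ringInverse_smul_of_smul_smul {x d : R} (hd : IsUnit d) (hdx : Commute d x)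
    (h : x • d • w = w) : x • w = d⁻¹ʳ • w := by
  rw [smul_smul, ← hdx.eq, mul_smul] at h
  conv_rhs => rw [← h, smul_smul, Ring.inverse_mul_cancel _ hd, one_smul]

theorem berFactor_smul {x d : R} (hx : IsUnit x) (hd : IsUnit d) (hdx : Commute d x)
    (h : x • d • w = w) (a : ℕ) : berFactor a x • w = berFactor a d⁻¹ʳ • w := by
  unfold berFactor
  split_ifs
  · rw [Ring.inverse_inverse hd]
    nth_rw 1 [← h]
    rw [smul_smul, Ring.inverse_mul_cancel _ hx, one_smul]
  · exact ringInverse_smul_of_smul_smul hd hdx h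

theorem ringInverse_last_last_smul_smul {N : ℕ} {X : Matrix (Fin (N + 1)) (Fin (N + 1)) R} {d : R}
    (hX : IsUnit X) (hw : ∀ i, i < Fin.last N → X i (Fin.last N) • w = 0)
    (hwt : X (Fin.last N) (Fin.last N) • w = d • w) :
    X⁻¹ʳ (Fin.last N) (Fin.last N) • d • w = w := by
  have h := congrArg (· • w) (congr_fun₂ (Ring.inverse_mul_cancel X hX) (Fin.last N) (Fin.last N))
  simpa only [mul_apply, Fin.sum_univ_castSucc, add_smul, Finset.sum_smul, mul_smul,
    hw _ (Fin.castSucc_lt_last _), smul_zero, Finset.sum_const_zero, zero_add, hwt, one_apply_eq,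
    one_smul] using h

theorem gaussBerezinian_smul {N : ℕ} {p : Fin N → ℕ} {E : Matrix (Fin N) (Fin N) R}
    {u d : Fin N → R} (hu : ∀ a, IsSpectralParam E (u a)) (hd : ∀ a, IsUnit (d a))
    (hcomm : ∀ a x, Commute (d a) x) (hw : ∀ i j, i < j → E i j • w = 0)
    (hwt : ∀ a, (u a + E a a) • w = d a • w) :
    gaussBerezinian p u E • w = (List.ofFn fun a => berFactor (p a) (d a)⁻¹ʳ).prod • w := by
  induction N with
  | zero => rfl
  | succ N ih =>
    have hlast := berFactor_smul (hu (Fin.last N)).isUnit_resolvent_last (hd (Fin.last N))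
      (hcomm _ _) (ringInverse_last_last_smul_smul (hu _).isUnit (fun i hi => by
        simpa [hi.ne] using hw i _ hi) (by simpa using hwt (Fin.last N))) (p (Fin.last N))
    have hfactor (x : R) : Commute (berFactor (p (Fin.last N)) (d (Fin.last N))⁻¹ʳ) x :=
      (commute_berFactor _ (commute_ringInverse (hcomm _ x).symm)).symm
    rw [gaussBerezinian, mul_smul, hlast, smul_smul, ← (hfactor _).eq, mul_smul,
      ih (u := u ∘ Fin.castSucc) (d := d ∘ Fin.castSucc)
        (fun a => (hu a.castSucc).submatrix (Fin.castSucc_injective N))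
        (fun a => hd _) (fun a => hcomm _) (fun i j hij => hw _ _ hij) (fun a => hwt _),
      smul_smul, (hfactor _).eq, List.ofFn_succ', List.concat_eq_append, List.prod_append,
      List.prod_singleton]
    rfl

end HighestWeight

section CoefficientMap

/-- The homomorphism of Laurent series algebras induced by a homomorphism of the coefficients. -/
def mapCoeff {A B : Type} [Ring A] [Ring B] (f : A →+* B) : TSer A →+* TSer B where
  toFun x := x.map f
  map_one' := HahnSeries.map_one f.toMonoidWithZeroHom
  map_mul' _ _ := HahnSeries.map_mul (f : A →ₙ+* B)
  map_zero' := by ext; simp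
  map_add' _ _ := HahnSeries.map_add (f : A →+ B)

variable {A B : Type} [Ring A] [Ring B]

theorem coeff_mapCoeff (f : A →+* B) (x : TSer A) (k : ℤ) :
    (mapCoeff f x).coeff k = f (x.coeff k) :=
  rfl

theorem mapCoeff_Tv (f : A →+* B) : mapCoeff f Tv = Tv :=
  (HahnSeries.map_single (f : ZeroHom A B)).trans (congrArg _ (map_one f))

theorem mapCoeff_C (f : A →+* B) (a : A) : mapCoeff f (HahnSeries.C a) = HahnSeries.C (f a) :=
  HahnSeries.map_C a f

theorem coeff_smul_of_single {V : Type} [AddCommGroup V] [Module A V] (x : TSer A) (v : V)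
    (k : ℤ) :
    ((HahnModule.of A).symm (x • HahnModule.of A (HahnSeries.single (0 : ℤ) v))).coeff k =
      x.coeff k • v := by
  rw [HahnModule.coeff_smul_right (Set.isPWO_singleton (0 : ℤ))
    (by exact HahnSeries.support_single_subset)]
  rw [Finset.sum_subset (s₂ := {(k, 0)})]
  · simp only [Finset.sum_singleton, Equiv.symm_apply_apply, HahnSeries.coeff_single_same]
  · rintro ⟨i, j⟩ hij
    obtain ⟨-, rfl, hk⟩ := (Finset.mem_vaddAntidiagonal _ _).1 hij
    exact Finset.mem_singleton.2 (congrArg (·, 0) ((add_zero i).symm.trans hk))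
  · simp +contextual [Finset.mem_vaddAntidiagonal]

theorem C_smul_of_single {V : Type} [AddCommGroup V] [Module A V] {v : V} {a b : A}
    (h : a • v = b • v) :
    (HahnSeries.C a : TSer A) • HahnModule.of A (HahnSeries.single (0 : ℤ) v) =
      (HahnSeries.C b : TSer A) • HahnModule.of A (HahnSeries.single (0 : ℤ) v) := by
  refine HahnModule.ext _ _ (funext fun k => ?_)
  rw [coeff_smul_of_single, coeff_smul_of_single, HahnSeries.C_apply, HahnSeries.C_apply]
  by_cases hk : k = 0
  · rw [hk, HahnSeries.coeff_single_same, HahnSeries.coeff_single_same, h]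
  · rw [HahnSeries.coeff_single_of_ne hk, HahnSeries.coeff_single_of_ne hk]

end CoefficientMap

section HarishChandraSeries

theorem isUnit_Tv_add_C {A : Type} [Ring A] (a : A) : IsUnit (Tv + HahnSeries.C (Γ := ℤ) a) := by
  let entry : Matrix (Fin 1) (Fin 1) (TSer A) ≃* TSer A := uniqueRingEquiv.toMulEquiv
  have hentry : ((Tv : TSer A) • 1 + (of fun _ _ : Fin 1 => a).map (HahnSeries.C (Γ := ℤ))) 0 0 =
      Tv + HahnSeries.C a := by
    rw [Matrix.add_apply, Matrix.smul_apply, one_apply_eq, smul_eq_mul, mul_one, map_apply,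
      of_apply]
  exact hentry ▸ (isUnit_map_iff entry _).2 (isUnit_Tv_smul_one_add_map_C _)

variable {K L : Type} [CommRing K] [CommRing L] {m n : ℕ}

/-- The factor of the Harish-Chandra image of the Capelli Berezinian at an index, up to inversion,
in terms of the shifted weight `ℓ`. -/
def hcFactor (ℓ : Ind m n → K) : Ind m n → TSer K :=
  Sum.elim (fun i => Tv + HahnSeries.C (ℓ (Sum.inl i) - m))
    fun j => Tv - HahnSeries.C (ℓ (Sum.inr j) + m)

/-- The value of the Capelli Berezinian on a highest weight vector of shifted weight `ℓ`. -/
def hcSeries (ℓ : Ind m n → K) : TSer K :=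
  (∏ i, hcFactor ℓ (Sum.inl i)) * ∏ j, (hcFactor ℓ (Sum.inr j))⁻¹ʳ

theorem isUnit_hcFactor (ℓ : Ind m n → K) (a : Ind m n) : IsUnit (hcFactor ℓ a) := by
  rcases a with i | j
  · exact isUnit_Tv_add_C _
  · simpa only [hcFactor, Sum.elim_inr, sub_eq_add_neg, map_neg] using
      isUnit_Tv_add_C (-(ℓ (Sum.inr j) + m))

theorem mapCoeff_hcFactor (f : K →+* L) (ℓ : Ind m n → K) (a : Ind m n) :
    mapCoeff f (hcFactor ℓ a) = hcFactor (f ∘ ℓ) a := by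
  rcases a with i | j <;>
    simp only [hcFactor, Sum.elim_inl, Sum.elim_inr, map_add, map_sub, mapCoeff_Tv, mapCoeff_C,
      map_natCast, Function.comp_apply]

theorem mapCoeff_hcSeries (f : K →+* L) (ℓ : Ind m n → K) :
    mapCoeff f (hcSeries ℓ) = hcSeries (f ∘ ℓ) := by
  simp only [hcSeries, map_mul, map_prod, mapCoeff_hcFactor]
  congr! 2 with j
  rw [← mapCoeff_hcFactor]
  exact map_ringInverse_of_isUnit (mapCoeff f) (isUnit_hcFactor ℓ _)

theorem hcSeries_eq_prod_berFactor (ℓ : Ind m n → K) :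
    hcSeries ℓ = ∏ a : Fin (m + n), berFactor (pI (finSumFinEquiv.symm a))
      (hcFactor ℓ (finSumFinEquiv.symm a))⁻¹ʳ := by
  simp [hcSeries, Fin.prod_univ_add, pI, berFactor, Ring.inverse_inverse, isUnit_hcFactor]

theorem hcFactor_add_rhoS (lam : Ind m n → ℂ) (a : Ind m n) :
    hcFactor (lam + rhoS) a = Tv + HahnSeries.C (capelliShift a + (-1) ^ pI a * lam a) := by
  rcases a with i | j
  · simp only [hcFactor, capelliShift, rhoS, pI, Sum.elim_inl, Pi.add_apply]
    ring_nf
  · simp only [hcFactor, capelliShift, rhoS, pI, Sum.elim_inr, Pi.add_apply, sub_eq_add_neg,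
      ← map_neg]
    ring_nf

theorem map_berFactor_ringInverse {R S : Type*} [Ring R] [Ring S] (f : R →+* S) {x : R}
    (hx : IsUnit x) (a : ℕ) : f (berFactor a x⁻¹ʳ) = berFactor a (f x)⁻¹ʳ := by
  have hinv : f x⁻¹ʳ = (f x)⁻¹ʳ := map_ringInverse_of_isUnit f hx
  unfold berFactor
  split_ifs
  · rw [Ring.inverse_inverse hx, Ring.inverse_inverse (hx.map f)]
  · exact hinv

variable {A : Type} [Ring A] [Algebra ℂ A] {e : Ind m n → Ind m n → A}
  {V : Type} [AddCommGroup V] [Module A V] {v : V} {lam : Ind m n → ℂ}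

theorem capelliParam_add_smul (hwt : ∀ i, e i i • v = algebraMap ℂ A (lam i) • v)
    (a : Fin (m + n)) :
    (capelliParam m n A a + scrE m n e (finSumFinEquiv.symm a) (finSumFinEquiv.symm a)) •
        HahnModule.of A (HahnSeries.single (0 : ℤ) v) =
      mapCoeff (algebraMap ℂ A) (hcFactor (lam + rhoS) (finSumFinEquiv.symm a)) •
        HahnModule.of A (HahnSeries.single (0 : ℤ) v) := by
  rw [capelliParam, scrE, HahnSeries.algebraMap_apply, add_assoc, ← map_add, hcFactor_add_rhoS,
    map_add (mapCoeff _), mapCoeff_Tv, mapCoeff_C, add_smul, add_smul]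
  congr 1
  refine C_smul_of_single ?_
  rw [add_smul, Algebra.smul_def, mul_smul, hwt, smul_smul, ← map_mul, ← add_smul, ← map_add]

theorem iltI_iff {i j : Ind m n} : iltI i j ↔ finSumFinEquiv i < finSumFinEquiv j := by
  rcases i with i | i <;> rcases j with j | j <;>
    simp only [iltI, Fin.lt_def, finSumFinEquiv_apply_left, finSumFinEquiv_apply_right,
      Fin.val_castAdd, Fin.val_natAdd] <;> lia

theorem coeff_capelli_smul (he : IsGLFamily pI e) (hw : ∀ i j, iltI i j → e i j • v = 0)
    (hwt : ∀ i, e i i • v = algebraMap ℂ A (lam i) • v) (k : ℤ) :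
    (capelli (scrE m n e) (-Tv)).coeff k • v =
      algebraMap ℂ A ((hcSeries (lam + rhoS)).coeff k) • v := by
  let w : HahnModule ℤ A V := HahnModule.of A (HahnSeries.single 0 v)
  have hcomm (a : Fin (m + n)) (x : TSer A) :
      Commute (mapCoeff (algebraMap ℂ A) (hcFactor (lam + rhoS) (finSumFinEquiv.symm a))) x := by
    rw [hcFactor_add_rhoS, map_add, mapCoeff_Tv, mapCoeff_C]
    exact commute_Tv_add_algebraMap _ x
  have hsum : capelli (scrE m n e) (-Tv) • w =
      mapCoeff (algebraMap ℂ A) (hcSeries (lam + rhoS)) • w := by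
    rw [scrE_eq_map_superMatrix, capelli_eq_gaussBerezinian (isSuperGL_superMatrix he)]
    refine (gaussBerezinian_smul
      (isSpectralSequence_capelliParam ((superMatrix pI e).submatrix
        finSumFinEquiv.symm finSumFinEquiv.symm)).isSpectralParam
      (fun a => (isUnit_hcFactor (lam + rhoS) (finSumFinEquiv.symm a)).map
        (mapCoeff (algebraMap ℂ A))) hcomm ?_ ?_).trans ?_
    · intro i j hij
      have hzero : superMatrix pI e (finSumFinEquiv.symm i) (finSumFinEquiv.symm j) • v =
          (0 : A) • v := by
        rw [superMatrix, of_apply, smul_assoc, hw _ _ (iltI_iff.2 (by simpa using hij)),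
          smul_zero, zero_smul]
      simpa using C_smul_of_single hzero
    · rw [← submatrix_map, ← scrE_eq_map_superMatrix]
      exact capelliParam_add_smul hwt
    · rw [hcSeries_eq_prod_berFactor, ← List.prod_ofFn, map_list_prod, List.map_ofFn]
      congr! 4 with a
      exact (map_berFactor_ringInverse _ (isUnit_hcFactor _ _) _).symm
  have h := congrArg (fun x => ((HahnModule.of A).symm x).coeff k) hsum
  simpa only [w, coeff_smul_of_single, coeff_mapCoeff] using h

end HarishChandraSeries

section OscillatorRealization

/-- Super Weyl algebra relations for families of multiplication operators `x` and derivations `d`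
of parities `q`. -/
structure IsSuperWeyl {S R : Type*} [Ring R] (q : S → ℕ) (x d : S → R) : Prop where
  x_mul_x : ∀ s t, x s * x t = (-1 : ℤˣ) ^ (q s * q t) • (x t * x s)
  d_mul_d : ∀ s t, d s * d t = (-1 : ℤˣ) ^ (q s * q t) • (d t * d s)
  d_mul_x_self : ∀ s, d s * x s = (-1 : ℤˣ) ^ (q s * q s) • (x s * d s) + 1
  d_mul_x_of_ne : ∀ s t, s ≠ t → d s * x t = (-1 : ℤˣ) ^ (q s * q t) • (x t * d s)

variable {S R : Type*} [DecidableEq S] [Ring R] {q : S → ℕ} {x d : S → R}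

theorem IsSuperWeyl.d_mul_x (h : IsSuperWeyl q x d) (s t : S) :
    d s * x t = (-1 : ℤˣ) ^ (q s * q t) • (x t * d s) + if s = t then 1 else 0 := by
  split_ifs with hst
  · exact hst ▸ h.d_mul_x_self s
  · rw [h.d_mul_x_of_ne s t hst, add_zero]

theorem IsSuperWeyl.x_mul_d (h : IsSuperWeyl q x d) (s t : S) :
    x s * d t = (-1 : ℤˣ) ^ (q s * q t) • (d t * x s - if t = s then 1 else 0) := by
  rw [h.d_mul_x, add_sub_cancel_right, smul_smul, ← pow_add, mul_comm (q t),
    (Even.add_self _).neg_one_pow, one_smul]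

theorem IsSuperWeyl.supercommutator (h : IsSuperWeyl q x d) (s t u w : S) :
    x s * d t * (x u * d w) -
        (-1 : ℤˣ) ^ ((q s + q t) * (q u + q w)) • (x u * d w * (x s * d t)) =
      (if t = u then x s * d w else 0) -
        (-1 : ℤˣ) ^ ((q s + q t) * (q u + q w)) • if w = s then x u * d t else 0 := by
  have hreorder : x s * x u * (d t * d w) =
      (-1 : ℤˣ) ^ (q s * q u + q t * q w + q s * q w) •
        (x u * d w * (x s * d t) - if w = s then x u * d t else 0) := by
    calc x s * x u * (d t * d w)
        = (-1 : ℤˣ) ^ (q s * q u + q t * q w) • (x u * (x s * d w) * d t) := by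
          rw [h.x_mul_x s u, h.d_mul_d t w, smul_mul_smul_comm, ← pow_add]
          simp only [mul_assoc]
      _ = _ := by
          rw [h.x_mul_d s w, mul_smul_comm, smul_mul_assoc, smul_smul, ← pow_add, mul_sub, sub_mul]
          simp only [mul_assoc, mul_ite, ite_mul, mul_one, mul_zero, zero_mul]
  have hsign : (-1 : ℤˣ) ^ (q t * q u + (q s * q u + q t * q w + q s * q w)) =
      (-1) ^ ((q s + q t) * (q u + q w)) := congrArg _ (by ring)
  calc x s * d t * (x u * d w) - (-1 : ℤˣ) ^ ((q s + q t) * (q u + q w)) •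
        (x u * d w * (x s * d t))
      = (if t = u then x s * d w else 0) + (-1 : ℤˣ) ^ (q t * q u) • (x s * x u * (d t * d w)) -
        (-1 : ℤˣ) ^ ((q s + q t) * (q u + q w)) • (x u * d w * (x s * d t)) := by
        rw [mul_assoc, ← mul_assoc (d t), h.d_mul_x t u, add_mul, mul_add, add_comm]
        simp only [mul_assoc, smul_mul_assoc, mul_smul_comm, ite_mul, mul_ite, one_mul, zero_mul,
          mul_zero]
    _ = _ := by
        rw [hreorder, smul_smul, ← pow_add, hsign, smul_sub]
        abel

theorem IsSuperWeyl.isGLFamily {ι : Type} {κ : Type*} [DecidableEq ι] [Fintype κ] {p : ι → ℕ}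
    {r : κ → ℕ} {x d : ι × κ → R} (h : IsSuperWeyl (fun s => p s.1 + r s.2) x d) :
    IsGLFamily p fun i j => ∑ k, x (i, k) * d (j, k) := by
  classical
  intro i j k l
  have hterm (a b : κ) : x (i, a) * d (j, a) * (x (k, b) * d (l, b)) -
        (-1 : ℤˣ) ^ ((p i + p j) * (p k + p l)) • (x (k, b) * d (l, b) * (x (i, a) * d (j, a))) =
      (if j = k then if a = b then x (i, a) * d (l, b) else 0 else 0) -
        (-1 : ℤˣ) ^ ((p i + p j) * (p k + p l)) •
          if i = l then if b = a then x (k, b) * d (j, a) else 0 else 0 := by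
    have hsign : (-1 : ℤˣ) ^ ((p i + p j) * (p k + p l)) =
        (-1) ^ ((p i + r a + (p j + r a)) * (p k + r b + (p l + r b))) :=
      neg_one_pow_congr (by simp only [Nat.even_add, Nat.even_mul]; tauto)
    simpa only [Prod.mk.injEq, ite_and, hsign, eq_comm (a := l)] using
      h.supercommutator (i, a) (j, a) (k, b) (l, b)
  calc (∑ a, x (i, a) * d (j, a)) * (∑ b, x (k, b) * d (l, b)) -
        (-1 : ℤˣ) ^ ((p i + p j) * (p k + p l)) •
          ((∑ b, x (k, b) * d (l, b)) * ∑ a, x (i, a) * d (j, a))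
      = ∑ a, ∑ b, (x (i, a) * d (j, a) * (x (k, b) * d (l, b)) -
          (-1 : ℤˣ) ^ ((p i + p j) * (p k + p l)) •
            (x (k, b) * d (l, b) * (x (i, a) * d (j, a)))) := by
        simp only [Finset.sum_mul_sum, Finset.sum_sub_distrib, Finset.smul_sum]
        rw [Finset.sum_comm (f := fun a b => _ • (x (k, a) * d (l, a) * (x (i, b) * d (j, b))))]
    _ = _ := by
        simp only [hterm, Finset.sum_sub_distrib, ← Finset.smul_sum, Finset.sum_ite_irrel,
          Finset.sum_ite_eq, Finset.sum_ite_eq', Finset.mem_univ, if_true, Finset.sum_const_zero]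

end OscillatorRealization

section FockSpace

variable {S : Type} [LinearOrder S] [Fintype S]

/-- The Jordan–Wigner sign `(-1) ^ (|s| * ∑ t < s, |t| * f t)` picked up by an operator of parity
`|s|` on its way past the factors `t < s` of the monomial with exponents `f`. -/
def jordanWigner (q : S → ℕ) (s : S) (f : S → ℤ) : ℤˣ :=
  (-1) ^ (q s * ∑ t with t < s, q t * f t)

theorem jordanWigner_add_single_self (q : S → ℕ) (s : S) (f : S → ℤ) (k : ℤ) :
    jordanWigner q s (f + Pi.single s k) = jordanWigner q s f := by
  refine congrArg (fun z : ℤ => (-1 : ℤˣ) ^ (q s * z)) (Finset.sum_congr rfl fun t ht => ?_)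
  rw [Pi.add_apply, Pi.single_eq_of_ne (Finset.mem_filter.1 ht).2.ne, add_zero]

theorem jordanWigner_add_single_of_gt (q : S → ℕ) {s t : S} (hst : s < t) (f : S → ℤ) (k : ℤ) :
    jordanWigner q s (f + Pi.single t k) = jordanWigner q s f := by
  refine congrArg (fun z : ℤ => (-1 : ℤˣ) ^ (q s * z)) (Finset.sum_congr rfl fun u hu => ?_)
  rw [Pi.add_apply, Pi.single_eq_of_ne ((Finset.mem_filter.1 hu).2.trans hst).ne, add_zero]

theorem units_zpow_mul_of_odd (u : ℤˣ) (a : ℕ) {k : ℤ} (hk : Odd k) : u ^ (a * k) = u ^ a := by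
  obtain ⟨r, rfl⟩ := hk
  rw [mul_add, mul_one, _root_.zpow_add, zpow_natCast, mul_left_comm, _root_.zpow_mul, zpow_ofNat,
    Int.units_sq, _root_.one_zpow, one_mul]

theorem jordanWigner_add_single_of_lt (q : S → ℕ) {s t : S} (hst : s < t) (f : S → ℤ) {k : ℤ}
    (hk : Odd k) :
    jordanWigner q t (f + Pi.single s k) = (-1) ^ (q s * q t) * jordanWigner q t f := by
  have hsum : ∑ u with u < t, q u * (Pi.single s k : S → ℤ) u = q s * k := by
    rw [Finset.sum_eq_single_of_mem s (by simpa using hst)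
      (fun u _ hu => by rw [Pi.single_eq_of_ne hu, mul_zero]), Pi.single_eq_same]
  simp only [jordanWigner, Pi.add_apply, mul_add, Finset.sum_add_distrib, hsum]
  rw [← units_zpow_mul_of_odd _ _ hk, ← _root_.zpow_add]
  congr 1
  push_cast
  ring

/-- The operator shifting the exponent of the variable `s` by `k`, with a coefficient depending on
that exponent. -/
def ladder (q : S → ℕ) (s : S) (c : ℤ → ℂ) (k : ℤ) : Module.End ℂ ((S → ℤ) →₀ ℂ) :=
  Finsupp.linearCombination ℂ fun f =>
    jordanWigner q s f • Finsupp.single (f + Pi.single s k) (c (f s))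

theorem ladder_single (q : S → ℕ) (s : S) (c : ℤ → ℂ) (k : ℤ) (f : S → ℤ) (z : ℂ) :
    ladder q s c k (Finsupp.single f z) =
      jordanWigner q s f • Finsupp.single (f + Pi.single s k) (c (f s) * z) := by
  rw [ladder, Finsupp.linearCombination_single, smul_comm, Finsupp.smul_single, smul_eq_mul,
    mul_comm]

theorem ladder_mul_ladder_single_self (q : S → ℕ) (s : S) (c d : ℤ → ℂ) (k l : ℤ) (f : S → ℤ)
    (z : ℂ) : (ladder q s c k * ladder q s d l) (Finsupp.single f z) =
      Finsupp.single (f + Pi.single s (l + k)) (c (f s + l) * d (f s) * z) := by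
  rw [Module.End.mul_apply, ladder_single, LinearMap.map_smul_of_tower, ladder_single,
    jordanWigner_add_single_self, smul_smul, Int.units_mul_self, one_smul, Pi.add_apply,
    Pi.single_eq_same, mul_assoc, add_assoc, Pi.single_add]

theorem ladder_mul_ladder_single_of_ne (q : S → ℕ) {s t : S} (hst : s ≠ t) (c d : ℤ → ℂ) (k l : ℤ)
    (f : S → ℤ) (z : ℂ) : (ladder q s c k * ladder q t d l) (Finsupp.single f z) =
      (jordanWigner q t f * jordanWigner q s (f + Pi.single t l)) •
        Finsupp.single (f + Pi.single t l + Pi.single s k) (c (f s) * d (f t) * z) := by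
  rw [Module.End.mul_apply, ladder_single, LinearMap.map_smul_of_tower, ladder_single, smul_smul,
    Pi.add_apply, Pi.single_eq_of_ne hst, add_zero, mul_assoc]

theorem ladder_mul_ladder_of_ne (q : S → ℕ) {s t : S} (hst : s ≠ t) (c d : ℤ → ℂ) {k l : ℤ}
    (hk : Odd k) (hl : Odd l) : ladder q s c k * ladder q t d l =
      (-1 : ℤˣ) ^ (q s * q t) • (ladder q t d l * ladder q s c k) := by
  have hsign (f : S → ℤ) : jordanWigner q t f * jordanWigner q s (f + Pi.single t l) =
      (-1 : ℤˣ) ^ (q s * q t) * (jordanWigner q s f * jordanWigner q t (f + Pi.single s k)) := by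
    obtain h | h := hst.lt_or_gt
    · rw [jordanWigner_add_single_of_gt q h, jordanWigner_add_single_of_lt q h f hk,
        mul_left_comm (jordanWigner q s f), ← mul_assoc, ← pow_add, (Even.add_self _).neg_one_pow,
        one_mul, mul_comm]
    · rw [jordanWigner_add_single_of_gt q h, jordanWigner_add_single_of_lt q h f hl,
        mul_left_comm, mul_comm (jordanWigner q t f), mul_comm (q t)]
  refine Finsupp.lhom_ext fun f z => ?_
  rw [LinearMap.smul_apply, ladder_mul_ladder_single_of_ne q hst,
    ladder_mul_ladder_single_of_ne q hst.symm, hsign, smul_smul, add_right_comm,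
    mul_comm (c (f s))]

/-- Coefficients `a`, `b` for which raising and lowering the exponent of a single variable of
parity `q` satisfy the super Weyl relations. -/
structure IsLadderPair (q : ℕ) (a b : ℤ → ℂ) : Prop where
  lower_raise : ∀ k, b (k + 1) * a k = (-1 : ℤˣ) ^ (q * q) • (a (k - 1) * b k) + 1
  raise_raise : Odd q → ∀ k, a (k + 1) * a k = 0
  lower_lower : Odd q → ∀ k, b (k - 1) * b k = 0

theorem ladder_mul_self (q : S → ℕ) (s : S) {c : ℤ → ℂ} {k : ℤ}
    (hc : Odd (q s) → ∀ l, c (l + k) * c l = 0) : ladder q s c k * ladder q s c k =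
      (-1 : ℤˣ) ^ (q s * q s) • (ladder q s c k * ladder q s c k) := by
  obtain hq | hq := Nat.even_or_odd (q s)
  · rw [(hq.mul_right _).neg_one_pow, one_smul]
  · have hzero : ladder q s c k * ladder q s c k = 0 := Finsupp.lhom_ext fun f z => by
      rw [ladder_mul_ladder_single_self, hc hq, zero_mul, Finsupp.single_zero,
        LinearMap.zero_apply]
    rw [hzero, smul_zero]

theorem isSuperWeyl_ladder {q : S → ℕ} {a b : S → ℤ → ℂ}
    (hab : ∀ s, IsLadderPair (q s) (a s) (b s)) :
    IsSuperWeyl q (fun s => ladder q s (a s) 1) fun s => ladder q s (b s) (-1) where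
  x_mul_x s t := by
    obtain rfl | hst := eq_or_ne s t
    · exact ladder_mul_self q s (hab s).raise_raise
    · exact ladder_mul_ladder_of_ne q hst _ _ odd_one odd_one
  d_mul_d s t := by
    obtain rfl | hst := eq_or_ne s t
    · exact ladder_mul_self q s (hab s).lower_lower
    · exact ladder_mul_ladder_of_ne q hst _ _ odd_neg_one odd_neg_one
  d_mul_x_self s := Finsupp.lhom_ext fun f z => by
    rw [LinearMap.add_apply, LinearMap.smul_apply, ladder_mul_ladder_single_self,
      ladder_mul_ladder_single_self, (hab s).lower_raise, add_neg_cancel, neg_add_cancel,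
      Pi.single_zero, add_zero, add_mul, Finsupp.single_add, smul_mul_assoc, Finsupp.smul_single,
      one_mul, Module.End.one_apply, sub_eq_add_neg]
  d_mul_x_of_ne s t hst := ladder_mul_ladder_of_ne q hst _ _ odd_neg_one odd_one

theorem isLadderPair_of_even {q : ℕ} (hq : Even q) {a b : ℤ → ℂ}
    (h : ∀ k, b (k + 1) * a k = a (k - 1) * b k + 1) : IsLadderPair q a b where
  lower_raise k := by rw [h, (hq.mul_right _).neg_one_pow, one_smul]
  raise_raise hq' := absurd hq (Nat.not_even_iff_odd.2 hq')
  lower_lower hq' := absurd hq (Nat.not_even_iff_odd.2 hq')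

theorem isLadderPair_of_odd {q : ℕ} (hq : Odd q) (c : ℤ) :
    IsLadderPair q (fun k => if Even (k + c) then 1 else 0)
      fun k => if Even (k + c) then 0 else 1 where
  lower_raise k := by
    rw [(hq.mul hq).neg_one_pow]
    obtain h | h := Int.even_or_odd (k + c)
    · simp [h, sub_add_eq_add_sub, add_right_comm k 1]
    · simp [h, Int.not_even_iff_odd.2 h, sub_add_eq_add_sub, add_right_comm k 1]
  raise_raise _ k := by by_cases h : Even (k + c) <;> simp [h, add_right_comm k 1]
  lower_lower _ k := by by_cases h : Even (k + c) <;> simp [h, sub_add_eq_add_sub]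

theorem exists_isLadderPair_lower_zero (q : ℕ) : ∃ a b, IsLadderPair q a b ∧ b 0 = 0 := by
  obtain hq | hq := Nat.even_or_odd q
  · exact ⟨1, fun k => k, isLadderPair_of_even hq fun k => by simp, Int.cast_zero⟩
  · exact ⟨_, _, isLadderPair_of_odd hq 0, if_pos (by simp)⟩

theorem exists_isLadderPair_raise_zero (q : ℕ) : ∃ a b, IsLadderPair q a b ∧ a 0 = 0 := by
  obtain hq | hq := Nat.even_or_odd q
  · exact ⟨fun k => k, 1, isLadderPair_of_even hq fun k => by simp, Int.cast_zero⟩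
  · exact ⟨_, _, isLadderPair_of_odd hq 1, if_neg (by simp)⟩

theorem IsLadderPair.raise_mul_lower_zero {q : ℕ} {a b : ℤ → ℂ} (h : IsLadderPair q a b)
    (ha : a 0 = 0) : a (-1) * b 0 = -((-1 : ℤˣ) ^ (q * q) • 1) := by
  have h0 := h.lower_raise 0
  rw [ha, mul_zero, zero_sub] at h0
  rw [← smul_neg, eq_neg_of_add_eq_zero_left h0.symm |>.symm, smul_smul, Int.units_mul_self,
    one_smul]

end FockSpace

section VacuumWeight

variable {ι : Type} [LinearOrder ι] {p : ι → ℕ}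

theorem exists_isLadderPair_of_weight (p : ι → ℕ) (c : ι → ℂ) (i k : ι) :
    ∃ a b, IsLadderPair (p i + p k) a b ∧ (k < i → b 0 = 0) ∧ (i < k → a 0 = 0) ∧
      a (-1) * b 0 = (if i = k then c i else 0) -
        if i < k then (-1 : ℤˣ) ^ ((p i + p k) * (p i + p k)) • 1 else 0 := by
  obtain h | rfl | h := lt_trichotomy i k
  · obtain ⟨a, b, hab, ha⟩ := exists_isLadderPair_raise_zero (p i + p k)
    exact ⟨a, b, hab, fun h' => absurd h h'.asymm, fun _ => ha, by
      rw [hab.raise_mul_lower_zero ha, if_neg h.ne, if_pos h, zero_sub]⟩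
  · exact ⟨1, fun k => k + c i, isLadderPair_of_even (Even.add_self _)
      (fun k => by simp [add_right_comm]),
      fun h => absurd h (lt_irrefl i), fun h => absurd h (lt_irrefl i), by simp⟩
  · obtain ⟨a, b, hab, hb⟩ := exists_isLadderPair_lower_zero (p i + p k)
    exact ⟨a, b, hab, fun _ => hb, fun h' => absurd h h'.asymm, by
      rw [hb, mul_zero, if_neg h.ne', if_neg h.asymm, sub_zero]⟩

theorem exists_isGLFamily_highestWeight [Finite ι] (p : ι → ℕ) (lam : ι → ℂ) :
    ∃ (W : Type) (_ : AddCommGroup W) (_ : Module ℂ W) (e : ι → ι → Module.End ℂ W) (w : W),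
      IsGLFamily p e ∧ w ≠ 0 ∧ (∀ i j, i < j → e i j w = 0) ∧ ∀ i, e i i w = lam i • w := by
  let _ := Fintype.ofFinite ι
  let c (i : ι) : ℂ :=
    lam i + ∑ k, if i < k then (-1 : ℤˣ) ^ ((p i + p k) * (p i + p k)) • 1 else 0
  choose a b hab hlower hraise hweight using exists_isLadderPair_of_weight p c
  let q (s : ι ×ₗ ι) : ℕ := p (ofLex s).1 + p (ofLex s).2
  have hq : IsSuperWeyl (S := ι × ι) (fun s => p s.1 + p s.2)
      (fun s => ladder q (toLex s) (a s.1 s.2) 1) fun s => ladder q (toLex s) (b s.1 s.2) (-1) :=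
    isSuperWeyl_ladder (q := q) fun s => hab (ofLex s).1 (ofLex s).2
  refine ⟨_, _, _, _, Finsupp.single 0 1, hq.isGLFamily, by simp, fun i j hij => ?_, fun i => ?_⟩
  · rw [LinearMap.sum_apply]
    refine Finset.sum_eq_zero fun k _ => ?_
    rw [ladder_mul_ladder_single_of_ne q (by simpa using hij.ne)]
    obtain h | h := lt_or_ge k j
    · simp [hlower j k h]
    · simp [hraise i k (hij.trans_le h)]
  · rw [LinearMap.sum_apply]
    simp only [ladder_mul_ladder_single_self, neg_add_cancel, Pi.single_zero, add_zero, mul_one,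
      Pi.zero_apply, zero_add, hweight, ← Finsupp.single_finsetSum]
    rw [Finset.sum_sub_distrib, Finset.sum_ite_eq, if_pos (Finset.mem_univ i), Finsupp.smul_single]
    simp [c]

end VacuumWeight

section VermaModules

theorem IsGLFamily.comp {ι κ : Type} {R : Type*} [DecidableEq ι] [DecidableEq κ] [Ring R]
    {p : ι → ℕ} {e : ι → ι → R} (he : IsGLFamily p e) {σ : κ → ι} (hσ : Function.Injective σ) :
    IsGLFamily (p ∘ σ) fun i j => e (σ i) (σ j) := fun i j k l => by
  simpa only [hσ.eq_iff, Function.comp_apply] using he (σ i) (σ j) (σ k) (σ l)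

theorem IsGLFamily.exists_algHom {ι R : Type} [DecidableEq ι] [Ring R] [Algebra ℂ R] {p : ι → ℕ}
    {e : ι → ι → R} (he : IsGLFamily p e) :
    ∃ ρ : UEA ι p →ₐ[ℂ] R, ∀ i j, ρ (gen p i j) = e i j := by
  have hrel ⦃x y : FreeAlgebra ℂ (ι × ι)⦄ (h : glRel ι p x y) :
      FreeAlgebra.lift ℂ (fun s : ι × ι => e s.1 s.2) x =
        FreeAlgebra.lift ℂ (fun s : ι × ι => e s.1 s.2) y := by
    obtain ⟨i, j, k, l⟩ := h
    simpa only [map_sub, map_mul, map_smul, apply_ite (FreeAlgebra.lift ℂ _), map_zero,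
      FreeAlgebra.lift_ι_apply, neg_one_pow_units_smul, eq_comm (a := l)] using he i j k l
  exact ⟨RingQuot.liftAlgHom ℂ ⟨_, hrel⟩, fun i j =>
    (RingQuot.liftAlgHom_mkAlgHom_apply ℂ _ hrel _).trans (FreeAlgebra.lift_ι_apply _ _)⟩

variable {m n : ℕ}

/-- The left ideal annihilating the generator of the Verma module of highest weight `lam`. -/
def vermaIdeal (lam : Ind m n → ℂ) : Ideal (UEA (Ind m n) pI) :=
  Ideal.span ({x | ∃ i j, iltI i j ∧ x = gen pI i j} ∪
    Set.range fun i => gen pI i i - algebraMap ℂ _ (lam i))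

variable {lam : Ind m n → ℂ} {W : Type} [AddCommGroup W] [Module ℂ W]

theorem exists_linearMap_quotient_vermaIdeal (ρ : UEA (Ind m n) pI →ₐ[ℂ] Module.End ℂ W) {w : W}
    (hw : ∀ i j, iltI i j → ρ (gen pI i j) w = 0) (hwt : ∀ i, ρ (gen pI i i) w = lam i • w) :
    ∃ g : (UEA (Ind m n) pI ⧸ vermaIdeal lam) →ₗ[ℂ] W, g (Submodule.Quotient.mk 1) = w ∧
      ∀ u x, g (u • x) = ρ u (g x) := by
  let _ := Module.compHom W ρ.toRingHom
  have : IsScalarTower ℂ (UEA (Ind m n) pI) W :=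
    ⟨fun c u x => congrArg (· x) (map_smul ρ c u)⟩
  have hker : vermaIdeal lam ≤
      LinearMap.ker (LinearMap.toSpanSingleton (UEA (Ind m n) pI) W w) := by
    refine Ideal.span_le.2 (Set.union_subset ?_ ?_)
    · rintro _ ⟨i, j, hij, rfl⟩
      exact hw i j hij
    · rintro _ ⟨i, rfl⟩
      change ρ (gen pI i i - algebraMap ℂ _ (lam i)) w = 0
      rw [map_sub, AlgHom.commutes, LinearMap.sub_apply, hwt, Module.algebraMap_end_apply, sub_self]
  exact ⟨((vermaIdeal lam).liftQ _ hker).restrictScalars ℂ, one_smul (UEA (Ind m n) pI) w,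
    map_smul ((vermaIdeal lam).liftQ _ hker)⟩

theorem exists_highestWeightVector (lam : Ind m n → ℂ) :
    ∃ (W : Type) (_ : AddCommGroup W) (_ : Module ℂ W)
      (ρ : UEA (Ind m n) pI →ₐ[ℂ] Module.End ℂ W) (w : W), w ≠ 0 ∧
      (∀ i j, iltI i j → ρ (gen pI i j) w = 0) ∧ ∀ i, ρ (gen pI i i) w = lam i • w := by
  obtain ⟨W, _, _, e, w, he, hw0, hw, hwt⟩ := exists_isGLFamily_highestWeight
    (pI ∘ (finSumFinEquiv (m := m) (n := n)).symm) (lam ∘ finSumFinEquiv.symm)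
  have hpI : (pI ∘ finSumFinEquiv.symm) ∘ finSumFinEquiv = (pI : Ind m n → ℕ) := by
    ext; simp
  obtain ⟨ρ, hρ⟩ := (hpI ▸ he.comp finSumFinEquiv.injective).exists_algHom
  refine ⟨W, _, _, ρ, w, hw0, fun i j hij => ?_, fun i => ?_⟩
  · rw [hρ, hw _ _ (iltI_iff.1 hij)]
  · rw [hρ, hwt, Function.comp_apply, Equiv.symm_apply_apply]

theorem quotient_vermaIdeal_mk_one_ne_zero (lam : Ind m n → ℂ) :
    (Submodule.Quotient.mk 1 : UEA (Ind m n) pI ⧸ vermaIdeal lam) ≠ 0 := by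
  obtain ⟨W, _, _, ρ, w, hw0, hw, hwt⟩ := exists_highestWeightVector lam
  obtain ⟨g, hg, -⟩ := exists_linearMap_quotient_vermaIdeal ρ hw hwt
  intro h
  rw [h, map_zero] at hg
  exact hw0 hg.symm

theorem nonempty_vermaM (lam : Ind m n → ℂ) : Nonempty (VermaM m n lam) := by
  have hmk (u : UEA (Ind m n) pI) : u • Submodule.Quotient.mk 1 =
      (Submodule.Quotient.mk u : UEA (Ind m n) pI ⧸ vermaIdeal lam) := by
    rw [← Submodule.Quotient.mk_smul, smul_eq_mul, mul_one]
  refine ⟨{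
    L := UEA (Ind m n) pI ⧸ vermaIdeal lam
    ρ := Algebra.lsmul ℂ ℂ _
    v := Submodule.Quotient.mk 1
    v_ne := quotient_vermaIdeal_mk_one_ne_zero lam
    hw := fun i j hij => ?_
    hwt := fun i => ?_
    gens := fun N hN hv => ?_
    univ := fun W _ _ ρ w hw hwt => exists_linearMap_quotient_vermaIdeal ρ hw hwt }⟩
  · exact (hmk _).trans ((Submodule.Quotient.mk_eq_zero _).2
      (Ideal.subset_span (Or.inl ⟨i, j, hij, rfl⟩)))
  · rw [← algebraMap_smul (UEA (Ind m n) pI) (lam i), hmk]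
    exact (hmk _).trans ((Submodule.Quotient.eq _).2
      (Ideal.subset_span (Or.inr ⟨i, rfl⟩)))
  · refine eq_top_iff.2 fun x _ => ?_
    obtain ⟨u, rfl⟩ := Submodule.Quotient.mk_surjective _ x
    exact hmk u ▸ hN u _ hv

theorem VermaM.coeff_capelli_apply (V : VermaM m n lam) (k : ℤ) :
    V.ρ ((capelli (scrE m n (gen pI)) (-Tv)).coeff k) V.v =
      (hcSeries (lam + rhoS)).coeff k • V.v := by
  let _ := Module.compHom V.L V.ρ.toRingHom
  have hscalar (c : ℂ) : V.ρ (algebraMap ℂ _ c) V.v = c • V.v := by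
    rw [AlgHom.commutes, Module.algebraMap_end_apply]
  exact (coeff_capelli_smul (V := V.L) (isGLFamily_gen pI) V.hw
    (fun i => (V.hwt i).trans (hscalar _).symm) k).trans (hscalar _)

end VermaModules

/-- Proposition 5.3.  The image of the Capelli Berezinian under the
Harish-Chandra homomorphism:
`χ_{m|n}(C_{m|n}(−T)) = (T+ℓ_1−m)⋯(T+ℓ_m−m)·(T−ℓ_{1̄}−m)^{−1}⋯(T−ℓ_{n̄}−m)^{−1}`,
as an identity of Laurent series (coefficientwise; in particular all coefficients of
`C_{m|n}(−T)` are central). -/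
theorem stmt12 (m n : ℕ)
    (χs : Subalgebra.center ℂ (UEA (Ind m n) pI) →ₐ[ℂ] MvPolynomial (Ind m n) ℂ)
    (hχs : ∀ (z : Subalgebra.center ℂ (UEA (Ind m n) pI)) (lam : Ind m n → ℂ)
      (V : VermaM m n lam) (x : V.L),
      V.ρ (z : UEA (Ind m n) pI) x =
        (MvPolynomial.eval (fun i => lam i + rhoS (m := m) (n := n) i) (χs z)) • x) :
    ∀ k : ℤ, ∃ h : (capelli (scrE m n (gen pI)) (-Tv)).coeff k ∈
        Subalgebra.center ℂ (UEA (Ind m n) pI),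
      χs ⟨(capelli (scrE m n (gen pI)) (-Tv)).coeff k, h⟩ =
        (((∏ i : Fin m, (Tv + HahnSeries.C
            (MvPolynomial.X (Sum.inl i) - MvPolynomial.C ((m : ℂ))))) *
          ∏ j : Fin n, Ring.inverse (Tv - HahnSeries.C
            (MvPolynomial.X (Sum.inr j) + MvPolynomial.C ((m : ℂ)))) :
          TSer (MvPolynomial (Ind m n) ℂ))).coeff k := by
  refine fun k => ⟨coeff_capelli_mem_center m n k, ?_⟩
  simp only [map_natCast]
  change _ = (hcSeries MvPolynomial.X).coeff k
  refine MvPolynomial.funext fun ℓ => ?_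
  obtain ⟨V⟩ := nonempty_vermaM (ℓ - rhoS)
  have hχ := hχs ⟨_, coeff_capelli_mem_center m n k⟩ (ℓ - rhoS) V V.v
  rw [V.coeff_capelli_apply, sub_add_cancel] at hχ
  have hX : ⇑(MvPolynomial.eval ℓ) ∘ MvPolynomial.X = ℓ := funext (MvPolynomial.eval_X (f := ℓ))
  calc MvPolynomial.eval ℓ (χs ⟨_, coeff_capelli_mem_center m n k⟩)
      = (hcSeries ℓ).coeff k := by
        simpa using (smul_left_injective ℂ V.v_ne hχ).symm
    _ = MvPolynomial.eval ℓ ((hcSeries MvPolynomial.X).coeff k) := by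
        rw [← coeff_mapCoeff (MvPolynomial.eval ℓ), mapCoeff_hcSeries, hX]
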